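/- Let A be a cyclic Nakayama algebra. Then 2·a(A) − 1 ≤ fin-pro A ≤ 2·a(A). -/

import Mathlib

open CategoryTheory CategoryTheory.Limits

noncomputable section

namespace ArtinAlg

variable (A : Type) [Ring A]

/-- `M` admits a projective resolution of length at most `n`. -/
inductive ProjDimLE : ℕ → ModuleCat.{0} A → Prop
  | zero (M : ModuleCat.{0} A) (h : Projective M) : ProjDimLE 0 M
  | succ (n : ℕ) (M P : ModuleCat.{0} A) (f : P ⟶ M) (hP : Projective P) (hf : Epi f)
      (h : ProjDimLE n (kernel f)) : ProjDimLE (n + 1) M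

/-- `M` admits an injective coresolution of length at most `n`. -/
inductive InjDimLE : ℕ → ModuleCat.{0} A → Prop
  | zero (M : ModuleCat.{0} A) (h : Injective M) : InjDimLE 0 M
  | succ (n : ℕ) (M I : ModuleCat.{0} A) (f : M ⟶ I) (hI : Injective I) (hf : Mono f)
      (h : InjDimLE n (cokernel f)) : InjDimLE (n + 1) M

/-- The projective dimension `pd M ∈ ℕ∞`. -/
def projDim (M : ModuleCat.{0} A) : ℕ∞ :=
  sInf {d : ℕ∞ | ∃ n : ℕ, d = n ∧ ProjDimLE A n M}

/-- The injective dimension `id M ∈ ℕ∞`. -/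
def injDim (M : ModuleCat.{0} A) : ℕ∞ :=
  sInf {d : ℕ∞ | ∃ n : ℕ, d = n ∧ InjDimLE A n M}

/-- `f : P ⟶ M` is a projective cover: `P` is projective and `f` is an essential
(superfluous) epimorphism. -/
def IsProjectiveCoverHom {P M : ModuleCat.{0} A} (f : P ⟶ M) : Prop :=
  Projective P ∧ Epi f ∧ ∀ (N : ModuleCat.{0} A) (g : N ⟶ P), Epi (g ≫ f) → Epi g

/-- `P` is a projective cover of `M`. -/
def IsProjCoverOf (M P : ModuleCat.{0} A) : Prop :=
  ∃ f : P ⟶ M, IsProjectiveCoverHom A f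

/-- `f : M ⟶ I` is an injective envelope: `I` is injective and `f` is an essential
monomorphism. -/
def IsInjectiveEnvelopeHom {M I : ModuleCat.{0} A} (f : M ⟶ I) : Prop :=
  Injective I ∧ Mono f ∧ ∀ (N : ModuleCat.{0} A) (g : I ⟶ N), Mono (f ≫ g) → Mono g

/-- `I` is an injective envelope of `M`. -/
def IsInjEnvOf (M I : ModuleCat.{0} A) : Prop :=
  ∃ f : M ⟶ I, IsInjectiveEnvelopeHom A f

/-- `X ≅ Ω M`, the kernel of a projective cover of `M`. -/
def IsSyzygyOf (M X : ModuleCat.{0} A) : Prop :=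
  ∃ (P : ModuleCat.{0} A) (f : P ⟶ M), IsProjectiveCoverHom A f ∧ Nonempty (X ≅ kernel f)

/-- `X ≅ Σ M`, the cokernel of an injective envelope of `M`. -/
def IsCosyzygyOf (M X : ModuleCat.{0} A) : Prop :=
  ∃ (I : ModuleCat.{0} A) (f : M ⟶ I), IsInjectiveEnvelopeHom A f ∧ Nonempty (X ≅ cokernel f)

/-- `X ≅ Ω^n M`. -/
def IsNthSyzygy : ℕ → ModuleCat.{0} A → ModuleCat.{0} A → Prop
  | 0, M, X => Nonempty (X ≅ M)
  | n + 1, M, X => ∃ Y, IsSyzygyOf A M Y ∧ IsNthSyzygy n Y X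

/-- `X ≅ Σ^n M`. -/
def IsNthCosyzygy : ℕ → ModuleCat.{0} A → ModuleCat.{0} A → Prop
  | 0, M, X => Nonempty (X ≅ M)
  | n + 1, M, X => ∃ Y, IsCosyzygyOf A M Y ∧ IsNthCosyzygy n Y X

/-- `X` is a direct summand of `Y`. -/
def IsDirectSummandOf (X Y : ModuleCat.{0} A) : Prop :=
  ∃ (i : X ⟶ Y) (r : Y ⟶ X), i ≫ r = 𝟙 X

/-- `X ∈ add W` : `X` is a direct summand of a finite direct sum of copies of `W`. -/
def InAdd (X W : ModuleCat.{0} A) : Prop :=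
  ∃ n : ℕ, IsDirectSummandOf A X (ModuleCat.of A (Fin n → ↥W))

/-- The delooping level of `M` is at most `d` :
`Ω^d M ∈ add (A ⊕ Ω^{d+1} M')` for some finitely generated `M'`. -/
def DelLE (d : ℕ) (M : ModuleCat.{0} A) : Prop :=
  ∃ X, IsNthSyzygy A d M X ∧
    ∃ M' : ModuleCat.{0} A, Module.Finite A ↥M' ∧
      ∃ X', IsNthSyzygy A (d + 1) M' X' ∧ InAdd A X (ModuleCat.of A (A × ↥X'))

/-- The delooping level `del M ∈ ℕ∞`. -/
def delLevel (M : ModuleCat.{0} A) : ℕ∞ :=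
  sInf {d : ℕ∞ | ∃ n : ℕ, d = n ∧ DelLE A n M}

/-- The delooping level of the algebra: the supremum of `del S` over the simple modules. -/
def delAlg : ℕ∞ :=
  sSup {d : ℕ∞ | ∃ S : ModuleCat.{0} A, IsSimpleModule A ↥S ∧ delLevel A S = d}

/-- `Q` is a minimal injective cogenerator: the injective envelope of the direct sum of
a complete set of representatives of the simple modules. -/
def IsMinimalInjectiveCogenerator (Q : ModuleCat.{0} A) : Prop :=
  ∃ (ι : Type) (_ : Fintype ι) (S : ι → ModuleCat.{0} A),
    (∀ i, IsSimpleModule A ↥(S i)) ∧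
    (∀ T : ModuleCat.{0} A, IsSimpleModule A ↥T → ∃! i, Nonempty (↥T ≃ₗ[A] ↥(S i))) ∧
    IsInjEnvOf A (ModuleCat.of A (∀ i, ↥(S i))) Q

/-- The desuspending level of `M` is at most `d` :
`Σ^d M ∈ add (D(A) ⊕ Σ^{d+1} M')` for some finitely generated `M'`. -/
def DesLE (d : ℕ) (M : ModuleCat.{0} A) : Prop :=
  ∃ X, IsNthCosyzygy A d M X ∧
    ∃ Q, IsMinimalInjectiveCogenerator A Q ∧
      ∃ M' : ModuleCat.{0} A, Module.Finite A ↥M' ∧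
        ∃ X', IsNthCosyzygy A (d + 1) M' X' ∧ InAdd A X (ModuleCat.of A (↥Q × ↥X'))

/-- The desuspending level `des M ∈ ℕ∞`. -/
def desLevel (M : ModuleCat.{0} A) : ℕ∞ :=
  sInf {d : ℕ∞ | ∃ n : ℕ, d = n ∧ DesLE A n M}

/-- The desuspending level of the algebra. -/
def desAlg : ℕ∞ :=
  sSup {d : ℕ∞ | ∃ S : ModuleCat.{0} A, IsSimpleModule A ↥S ∧ desLevel A S = d}

/-- The (small) finitistic projective dimension `fin-pro A`. -/
def finProDim : ℕ∞ :=
  sSup {d : ℕ∞ | ∃ M : ModuleCat.{0} A, Module.Finite A ↥M ∧ projDim A M = d ∧ d ≠ ⊤}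

/-- The (small) finitistic injective dimension `fin-inj A`. -/
def finInjDim : ℕ∞ :=
  sSup {d : ℕ∞ | ∃ M : ModuleCat.{0} A, Module.Finite A ↥M ∧ injDim A M = d ∧ d ≠ ⊤}

/-- The big finitistic projective dimension `Fin-pro A`. -/
def bigFinProDim : ℕ∞ :=
  sSup {d : ℕ∞ | ∃ M : ModuleCat.{0} A, projDim A M = d ∧ d ≠ ⊤}

/-- The big finitistic injective dimension `Fin-inj A`. -/
def bigFinInjDim : ℕ∞ :=
  sSup {d : ℕ∞ | ∃ M : ModuleCat.{0} A, injDim A M = d ∧ d ≠ ⊤}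

/-- `M` is an indecomposable nonzero module. -/
def Indec (M : ModuleCat.{0} A) : Prop :=
  Nontrivial ↥M ∧ ∀ (N₁ N₂ : Submodule A ↥M), IsCompl N₁ N₂ → N₁ = ⊥ ∨ N₂ = ⊥

/-- `M` is serial (uniserial): its submodules form a chain. -/
def IsUniserial (M : ModuleCat.{0} A) : Prop :=
  ∀ N₁ N₂ : Submodule A ↥M, N₁ ≤ N₂ ∨ N₂ ≤ N₁

/-- `A` is a Nakayama algebra: all finitely generated indecomposable modules are serial. -/
def IsNakayama : Prop :=
  ∀ M : ModuleCat.{0} A, Module.Finite A ↥M → Indec A M → IsUniserial A M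

/-- `A` is connected: it is not a nontrivial product of algebras. -/
def IsConnectedAlgebra : Prop :=
  Nontrivial A ∧ ∀ e : A, IsIdempotentElem e → e ∈ Set.center A → e = 0 ∨ e = 1

/-- `A` is a cyclic Nakayama algebra: connected Nakayama with no simple projective module. -/
def IsCyclicNakayama : Prop :=
  IsNakayama A ∧ IsConnectedAlgebra A ∧
    ¬ ∃ S : ModuleCat.{0} A, IsSimpleModule A ↥S ∧ Projective S

/-- `T ≅ top M` (and `top M` is simple): there is an essential epimorphism `M ⟶ T`. -/
def IsSimpleTopOf (M T : ModuleCat.{0} A) : Prop :=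
  IsSimpleModule A ↥T ∧
    ∃ f : M ⟶ T, Epi f ∧ ∀ (N : ModuleCat.{0} A) (g : N ⟶ M), Epi (g ≫ f) → Epi g

/-- `S ≅ soc M` (and `soc M` is simple): there is an essential monomorphism `S ⟶ M`. -/
def IsSimpleSocOf (M S : ModuleCat.{0} A) : Prop :=
  IsSimpleModule A ↥S ∧
    ∃ f : S ⟶ M, Mono f ∧ ∀ (N : ModuleCat.{0} A) (g : M ⟶ N), Mono (f ≫ g) → Mono g

/-- `0 ⟶ N ⟶ E ⟶ M ⟶ 0` is an almost split (Auslander-Reiten) sequence. -/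
def IsAlmostSplitSeq {N E M : ModuleCat.{0} A} (f : N ⟶ E) (g : E ⟶ M) : Prop :=
  Mono f ∧ Epi g ∧ (∃ w : f ≫ g = 0, (ShortComplex.mk f g w).Exact) ∧
  (¬ ∃ s : M ⟶ E, s ≫ g = 𝟙 M) ∧ Indec A N ∧ Indec A M ∧
  ∀ (X : ModuleCat.{0} A) (h : X ⟶ M), (¬ ∃ s : M ⟶ X, s ≫ h = 𝟙 M) → ∃ h' : X ⟶ E, h' ≫ g = h

/-- `N ≅ τ M`, the Auslander-Reiten translate of `M` : there is an almost split sequence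
`0 ⟶ N ⟶ E ⟶ M ⟶ 0`. -/
def IsTauOf (N M : ModuleCat.{0} A) : Prop :=
  ∃ (E : ModuleCat.{0} A) (f : N ⟶ E) (g : E ⟶ M), IsAlmostSplitSeq A f g

/-- `U ≅ ψ S = τ⁻ top (I S)`. -/
def IsPsiOf (S U : ModuleCat.{0} A) : Prop :=
  ∃ I, IsInjEnvOf A S I ∧ ∃ T, IsSimpleTopOf A I T ∧ IsTauOf A T U

/-- `T ≅ γ S = τ soc (P S)`. -/
def IsGammaOf (S T : ModuleCat.{0} A) : Prop :=
  ∃ P, IsProjCoverOf A S P ∧ ∃ U, IsSimpleSocOf A P U ∧ IsTauOf A T U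

/-- `T ≅ φ S = top (I S)`. -/
def IsPhiOf (S T : ModuleCat.{0} A) : Prop :=
  ∃ I, IsInjEnvOf A S I ∧ IsSimpleTopOf A I T

/-- There is a `ψ`-path `(S_1, …, S_m)` of cardinality `m` ending in `S`. -/
def PsiPathTo (m : ℕ) (S : ModuleCat.{0} A) : Prop :=
  1 ≤ m ∧ ∃ c : ℕ → ModuleCat.{0} A,
    (∀ i < m, IsSimpleModule A ↥(c i)) ∧
    (∀ i, i + 1 < m → IsPsiOf A (c i) (c (i + 1))) ∧
    Nonempty (c (m - 1) ≅ S)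

/-- `a(S)`: the supremum of the cardinalities of `ψ`-paths ending in `S`. -/
def aVal (S : ModuleCat.{0} A) : ℕ∞ :=
  sSup {d : ℕ∞ | ∃ m : ℕ, d = m ∧ PsiPathTo A m S}

/-- `a(A)`: the maximum of `a(S)` over the simple modules which are not `ψ`-cyclic. -/
def aAlg : ℕ∞ :=
  sSup {d : ℕ∞ | ∃ S : ModuleCat.{0} A, IsSimpleModule A ↥S ∧ aVal A S ≠ ⊤ ∧ aVal A S = d}

/-- `S` is a composition factor of `M`: a simple subquotient of `M`. -/
def IsCompFactorOf (S M : ModuleCat.{0} A) : Prop :=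
  IsSimpleModule A ↥S ∧ ∃ N' N : Submodule A ↥M, N' ≤ N ∧
    Nonempty ((↥N ⧸ N'.comap N.subtype) ≃ₗ[A] ↥S)

/-- `e(S) = min {pd S, pd (I S)} = x`. -/
def ERelVal (S : ModuleCat.{0} A) (x : ℕ∞) : Prop :=
  ∃ I, IsInjEnvOf A S I ∧ x = min (projDim A S) (projDim A I)

/-- `e*(S) = min {id S, id (P S)} = x`. -/
def EStarVal (S : ModuleCat.{0} A) (x : ℕ∞) : Prop :=
  ∃ P, IsProjCoverOf A S P ∧ x = min (injDim A S) (injDim A P)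

/-- `T = h(S) = top (Ω^{e(S)} N S)`, the homological permutation. -/
def HRel (S T : ModuleCat.{0} A) : Prop :=
  IsSimpleModule A ↥S ∧ IsSimpleModule A ↥T ∧
  ∃ z : ℕ, ERelVal A S z ∧
    ∃ N, ((Odd z ∧ N = S) ∨ (Even z ∧ IsInjEnvOf A S N)) ∧
      ∃ X, IsNthSyzygy A z N X ∧ IsSimpleTopOf A X T

/-- `S = h*(T) = soc (Σ^{e*(T)} N* T)`, the inverse homological permutation. -/
def HStarRel (T S : ModuleCat.{0} A) : Prop :=
  IsSimpleModule A ↥T ∧ IsSimpleModule A ↥S ∧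
  ∃ z : ℕ, EStarVal A T z ∧
    ∃ N, ((Odd z ∧ N = T) ∨ (Even z ∧ IsProjCoverOf A T N)) ∧
      ∃ X, IsNthCosyzygy A z N X ∧ IsSimpleSocOf A X S

/-- The `t`-fold relational iterate of a relation on modules (up to isomorphism). -/
def IterRel (r : ModuleCat.{0} A → ModuleCat.{0} A → Prop) :
    ℕ → ModuleCat.{0} A → ModuleCat.{0} A → Prop
  | 0, X, Y => Nonempty (X ≅ Y)
  | n + 1, X, Y => ∃ Z, r X Z ∧ IterRel r n Z Y

end ArtinAlg

namespace NakAux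
open ArtinAlg

/-! ### Chain (uniserial) modules -/

def Chain (A M : Type) [Ring A] [AddCommGroup M] [Module A M] : Prop :=
  ∀ N₁ N₂ : Submodule A M, N₁ ≤ N₂ ∨ N₂ ≤ N₁

section chain
variable {A : Type} [Ring A]
variable {M N S T L : Type} [AddCommGroup M] [Module A M] [AddCommGroup N] [Module A N]
  [AddCommGroup S] [Module A S] [AddCommGroup T] [Module A T] [AddCommGroup L] [Module A L]

theorem Chain.of_surj (h : Chain A M) (f : M →ₗ[A] N) (hf : Function.Surjective f) :
    Chain A N := by
  intro a b
  rcases h (a.comap f) (b.comap f) with h | h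
  · left
    rwa [Submodule.comap_le_comap_iff_of_surjective hf] at h
  · right
    rwa [Submodule.comap_le_comap_iff_of_surjective hf] at h

theorem Chain.of_inj (h : Chain A M) (f : N →ₗ[A] M) (hf : Function.Injective f) :
    Chain A N := by
  intro a b
  rcases h (a.map f) (b.map f) with h | h
  · left
    rwa [Submodule.map_le_map_iff_of_injective hf] at h
  · right
    rwa [Submodule.map_le_map_iff_of_injective hf] at h

theorem ker_isCoatom [IsSimpleModule A S] (f : M →ₗ[A] S) (hf : Function.Surjective f) :
    IsCoatom (LinearMap.ker f) := by
  rw [← isSimpleModule_iff_isCoatom]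
  exact (IsSimpleModule.congr (f.quotKerEquivOfSurjective hf))

theorem Chain.le_ker (h : Chain A M) [IsSimpleModule A S] (f : M →ₗ[A] S)
    (hf : Function.Surjective f) (K : Submodule A M) (hK : K ≠ ⊤) : K ≤ LinearMap.ker f := by
  rcases h K (LinearMap.ker f) with h1 | h1
  · exact h1
  · rcases (ker_isCoatom f hf).le_iff.1 h1 with h2 | h2
    · exact absurd h2 hK
    · exact h2.le

theorem Chain.surj_of_comp (h : Chain A M) [IsSimpleModule A S] (f : M →ₗ[A] S)
    (hf : Function.Surjective f) (g : L →ₗ[A] M) (hg : f ∘ₗ g ≠ 0) : Function.Surjective g := by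
  rw [← LinearMap.range_eq_top]
  by_contra hK
  apply hg
  ext x
  exact h.le_ker f hf _ hK ⟨x, rfl⟩

theorem Chain.ker_eq (h : Chain A M) [IsSimpleModule A S] [IsSimpleModule A T] (f : M →ₗ[A] S)
    (hf : Function.Surjective f) (g : M →ₗ[A] T) (hg : Function.Surjective g) :
    LinearMap.ker f = LinearMap.ker g :=
  le_antisymm (h.le_ker g hg _ (ker_isCoatom f hf).1) (h.le_ker f hf _ (ker_isCoatom g hg).1)

/-- factor a map through a surjection -/
theorem exists_factor (f : M →ₗ[A] N) (hf : Function.Surjective f) (g : M →ₗ[A] L)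
    (h : LinearMap.ker f ≤ LinearMap.ker g) : ∃ k : N →ₗ[A] L, k ∘ₗ f = g := by
  refine ⟨(Submodule.liftQ _ g h) ∘ₗ (f.quotKerEquivOfSurjective hf).symm.toLinearMap, ?_⟩
  ext x
  have : (f.quotKerEquivOfSurjective hf).symm (f x) = Submodule.Quotient.mk x := by
    rw [LinearEquiv.symm_apply_eq]; rfl
  simp [this]

theorem exists_equiv_of_ker_eq (f : M →ₗ[A] N) (hf : Function.Surjective f) (g : M →ₗ[A] L)
    (hg : Function.Surjective g)
    (h : LinearMap.ker f = LinearMap.ker g) : ∃ k : N ≃ₗ[A] L, ∀ x, k (f x) = g x := by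
  obtain ⟨k, hk⟩ := exists_factor f hf g h.le
  have hk' : ∀ x, k (f x) = g x := fun x => LinearMap.congr_fun hk x
  refine ⟨LinearEquiv.ofBijective k ⟨?_, ?_⟩, hk'⟩
  · rw [← LinearMap.ker_eq_bot, eq_bot_iff]
    intro y hy
    obtain ⟨x, rfl⟩ := hf y
    have : x ∈ LinearMap.ker g := by rw [LinearMap.mem_ker, ← hk']; exact hy
    rw [← h] at this
    exact this
  · intro z
    obtain ⟨x, rfl⟩ := hg z
    exact ⟨f x, hk' x⟩

theorem len_add (K : Submodule A M) :
    Module.length A M = Module.length A K + Module.length A (M ⧸ K) :=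
  Module.length_eq_add_of_exact K.subtype K.mkQ (Submodule.subtype_injective _)
    (Submodule.mkQ_surjective _) (LinearMap.exact_subtype_mkQ K)

theorem len_ker (f : M →ₗ[A] N) (hf : Function.Surjective f) :
    Module.length A M = Module.length A (LinearMap.ker f) + Module.length A N :=
  Module.length_eq_add_of_exact (LinearMap.ker f).subtype f (Submodule.subtype_injective _)
    hf (LinearMap.exact_subtype_ker_map f)

theorem eq_of_le_of_len {K K' : Submodule A M} (h : K ≤ K') (hfin : Module.length A K' ≠ ⊤)
    (hl : Module.length A K' ≤ Module.length A K) : K = K' := by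
  have h1 := len_add (K.comap K'.subtype)
  have h2 : Module.length A (K.comap K'.subtype) = Module.length A K :=
    (Submodule.comapSubtypeEquivOfLe h).length_eq
  rw [h2] at h1
  have h3 : Module.length A (K' ⧸ K.comap K'.subtype) = 0 := by
    have hk : Module.length A K ≠ ⊤ := by
      intro h4; rw [h4] at h1; exact hfin (by rw [h1]; exact top_add _)
    rw [h1] at hl
    have : Module.length A K + Module.length A (K' ⧸ K.comap K'.subtype) ≤ Module.length A K + 0 := by
      simpa using hl
    exact le_antisymm ((ENat.add_le_add_iff_left hk).1 this) (zero_le)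
  rw [Module.length_eq_zero_iff, Submodule.Quotient.subsingleton_iff] at h3
  exact le_antisymm h (Submodule.comap_subtype_eq_top.1 h3)

theorem Chain.le_of_len (h : Chain A M) (hfin : Module.length A M ≠ ⊤) (K K' : Submodule A M)
    (hl : Module.length A K ≤ Module.length A K') : K ≤ K' := by
  rcases h K K' with h1 | h1
  · exact h1
  · refine (eq_of_le_of_len h1 ?_ hl).ge
    intro h2
    exact hfin (top_le_iff.1 (h2 ▸ Module.length_le_of_injective K.subtype (Submodule.subtype_injective _)))

theorem Chain.eq_of_len (h : Chain A M) (hfin : Module.length A M ≠ ⊤) (K K' : Submodule A M)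
    (hl : Module.length A K = Module.length A K') : K = K' :=
  le_antisymm (h.le_of_len hfin _ _ hl.le) (h.le_of_len hfin _ _ hl.ge)

/-- An injectivity test: a map injective on a nonzero submodule of a chain module is injective. -/
theorem Chain.inj_of (h : Chain A M) (f : M →ₗ[A] L) (g : N →ₗ[A] M) [Nontrivial N]
    (hg : Function.Injective (f ∘ₗ g)) : Function.Injective f := by
  rw [← LinearMap.ker_eq_bot]
  rcases h (LinearMap.ker f) (LinearMap.range g) with h1 | h1
  · rw [eq_bot_iff]
    intro x hx
    obtain ⟨y, rfl⟩ := h1 hx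
    have : (f ∘ₗ g) y = 0 := hx
    have : y = 0 := hg (by rw [this, map_zero])
    simp [this]
  · exfalso
    obtain ⟨y, hy⟩ := exists_ne (0 : N)
    apply hy
    apply hg
    rw [map_zero]
    exact h1 ⟨y, rfl⟩

theorem Chain.indec (h : Chain A M) [Nontrivial M] : Indec A (ModuleCat.of A M) := by
  refine ⟨‹_›, fun N₁ N₂ hc => ?_⟩
  rcases h N₁ N₂ with h1 | h1
  · left; exact hc.disjoint.eq_bot_of_le h1
  · right; exact hc.disjoint.symm.eq_bot_of_le h1

end chain

/-! ### The class of algebras -/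

class CN (A : Type) [Ring A] : Prop where
  art : IsArtinianRing A
  nak : IsNakayama A
  nsp : ¬ ∃ S : ModuleCat.{0} A, IsSimpleModule A ↥S ∧ Projective S

attribute [instance] CN.art

variable {A : Type} [Ring A]

theorem len_fin [IsArtinianRing A] (M : Type) [AddCommGroup M] [Module A M] [Module.Finite A M] :
    Module.length A M ≠ ⊤ := Module.length_ne_top

theorem chain_of_indec [CN A] (M : Type) [AddCommGroup M] [Module A M] [Module.Finite A M]
    (h : Indec A (ModuleCat.of A M)) : Chain A M :=
  CN.nak (ModuleCat.of A M) (by assumption) h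

/-- Induction on a decomposition of a finitely generated module. -/
theorem decomp_ind [CN A] (Q : ∀ (M : Type) [AddCommGroup M] [Module A M], Prop)
    (h0 : ∀ (M : Type) [AddCommGroup M] [Module A M], Subsingleton M → Q M)
    (h1 : ∀ (M : Type) [AddCommGroup M] [Module A M], Module.Finite A M → Nontrivial M →
      Chain A M → Q M)
    (h2 : ∀ (M : Type) [AddCommGroup M] [Module A M] (N₁ N₂ : Submodule A M), IsCompl N₁ N₂ →
      Q N₁ → Q N₂ → Q M)
    (M : Type) [AddCommGroup M] [Module A M] [Module.Finite A M] : Q M := by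
  have key : ∀ n : ℕ, ∀ (M : Type) [AddCommGroup M] [Module A M] [Module.Finite A M],
      Module.length A M ≤ n → Q M := by
    intro n
    induction n with
    | zero =>
      intro M _ _ _ hn
      apply h0
      rw [← Module.length_eq_zero_iff (R := A)]
      simpa using hn
    | succ n ih =>
      intro M _ _ _ hn
      rcases subsingleton_or_nontrivial M with hs | hs
      · exact h0 M hs
      by_cases hi : Indec A (ModuleCat.of A M)
      · exact h1 M inferInstance hs (chain_of_indec M hi)
      · have : ∃ N₁ N₂ : Submodule A M, IsCompl N₁ N₂ ∧ N₁ ≠ ⊥ ∧ N₂ ≠ ⊥ := by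
          by_contra hcon
          push Not at hcon
          apply hi
          refine ⟨hs, fun N₁ N₂ hc => ?_⟩
          by_cases h : N₁ = ⊥
          · exact Or.inl h
          · exact Or.inr (hcon N₁ N₂ hc h)
        obtain ⟨N₁, N₂, hc, hn1, hn2⟩ := this
        have aux : ∀ N : Submodule A M, N ≠ ⊤ → Module.length A N ≤ n := by
          intro N hN
          have h3 := lt_of_lt_of_le (Submodule.length_lt (R := A) hN) hn
          have h4 : ((n + 1 : ℕ) : ℕ∞) = (n : ℕ∞) + 1 := by push_cast; rfl
          rw [h4] at h3
          exact ENat.lt_add_one_iff (ENat.natCast_ne_top n) |>.1 h3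
        have e1 : N₁ ≠ ⊤ := by
          rintro rfl
          exact hn2 (by simpa using hc.disjoint)
        have e2 : N₂ ≠ ⊤ := by
          rintro rfl
          exact hn1 (by simpa using hc.disjoint)
        exact h2 M N₁ N₂ hc (ih N₁ (aux _ e1)) (ih N₂ (aux _ e2))
  obtain ⟨n, hn⟩ := ENat.ne_top_iff_exists.1 (len_fin (A := A) M)
  exact key n M hn.ge

end NakAux

set_option linter.unusedSectionVars false
namespace NakAux
open ArtinAlg

variable {A : Type} [Ring A]

abbrev Smp (A : Type) [Ring A] := {S : ModuleCat.{0} A // IsSimpleModule A ↥S}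

instance (S : Smp A) : IsSimpleModule A S.1 := S.2
instance (S : Smp A) : Nontrivial S.1 := IsSimpleModule.nontrivial A S.1

theorem surj_of_ne_zero {M : Type} [AddCommGroup M] [Module A M] {S : Type} [AddCommGroup S]
    [Module A S] [IsSimpleModule A S] (f : M →ₗ[A] S) (h : f ≠ 0) : Function.Surjective f := by
  rw [← LinearMap.range_eq_top]
  rcases eq_bot_or_eq_top (LinearMap.range f) with h1 | h1
  · exact absurd (LinearMap.range_eq_bot.1 h1) h
  · exact h1

theorem ne_zero_of_surj {M : Type} [AddCommGroup M] [Module A M] {S : Type} [AddCommGroup S]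
    [Module A S] [IsSimpleModule A S] (f : M →ₗ[A] S) (h : Function.Surjective f) : f ≠ 0 := by
  rintro rfl
  have := IsSimpleModule.nontrivial A S
  obtain ⟨y, hy⟩ := exists_ne (0 : S)
  obtain ⟨x, hx⟩ := h y
  exact hy (by rw [← hx]; rfl)

theorem exists_PC [CN A] (S : Smp A) : ∃ P : ModuleCat.{0} A, Module.Finite A P ∧
    Module.Projective A P ∧ Chain A P ∧ ∃ f : P →ₗ[A] S.1, Function.Surjective f := by
  have key := decomp_ind (A := A) (fun M _ _ => ∀ f : M →ₗ[A] S.1, f ≠ 0 →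
    ∃ P : ModuleCat.{0} A, Module.Finite A P ∧ Chain A P ∧
      (∃ (i : P →ₗ[A] M) (r : M →ₗ[A] P), r ∘ₗ i = LinearMap.id) ∧ ∃ g : P →ₗ[A] S.1, g ≠ 0)
    (by
      intro M _ _ hM f hf
      exact absurd (LinearMap.ext fun x => by rw [Subsingleton.elim x 0]; simp) hf)
    (by
      intro M _ _ hfin hn hc f hf
      exact ⟨ModuleCat.of A M, hfin, hc, ⟨LinearMap.id, LinearMap.id, rfl⟩, f, hf⟩)
    (by
      intro M _ _ N₁ N₂ hc q1 q2 f hf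
      have aux : ∀ N N' : Submodule A M, IsCompl N N' →
        (∃ P : ModuleCat.{0} A, Module.Finite A P ∧ Chain A P ∧
      (∃ (i : P →ₗ[A] N) (r : N →ₗ[A] P), r ∘ₗ i = LinearMap.id) ∧ ∃ g : P →ₗ[A] S.1, g ≠ 0) →
        ∃ P : ModuleCat.{0} A, Module.Finite A P ∧ Chain A P ∧
      (∃ (i : P →ₗ[A] M) (r : M →ₗ[A] P), r ∘ₗ i = LinearMap.id) ∧ ∃ g : P →ₗ[A] S.1, g ≠ 0 := by
        rintro N N' hc ⟨P, h1, h2, ⟨i, r, hir⟩, h4⟩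
        refine ⟨P, h1, h2, ⟨N.subtype ∘ₗ i, r ∘ₗ N.projectionOnto N' hc, ?_⟩, h4⟩
        ext x
        have := LinearMap.congr_fun hir x
        simpa using this
      by_cases h1 : f ∘ₗ N₁.subtype = 0
      · apply aux N₂ N₁ hc.symm
        apply q2 (f ∘ₗ N₂.subtype)
        intro h2
        apply hf
        rw [← LinearMap.ker_eq_top, eq_top_iff, ← hc.sup_eq_top]
        refine sup_le ?_ ?_
        · intro x hx
          exact LinearMap.congr_fun h1 ⟨x, hx⟩
        · intro x hx
          exact LinearMap.congr_fun h2 ⟨x, hx⟩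
      · exact aux N₁ N₂ hc (q1 _ h1))
    A
  obtain ⟨y, hy⟩ := exists_ne (0 : S.1)
  obtain ⟨P, h1, h2, ⟨i, r, hir⟩, g, hg⟩ := key (LinearMap.toSpanSingleton A S.1 y) (by
    intro h
    apply hy
    have := LinearMap.congr_fun h 1
    simpa using this)
  exact ⟨P, h1, Module.Projective.of_split i r hir, h2, g, surj_of_ne_zero g hg⟩

def PC [CN A] (S : Smp A) : ModuleCat.{0} A := (exists_PC S).choose
instance [CN A] (S : Smp A) : Module.Finite A (PC S) := (exists_PC S).choose_spec.1
instance [CN A] (S : Smp A) : Module.Projective A (PC S) := (exists_PC S).choose_spec.2.1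
theorem PC_chain [CN A] (S : Smp A) : Chain A (PC S) := (exists_PC S).choose_spec.2.2.1
def pf [CN A] (S : Smp A) : PC S →ₗ[A] S.1 := (exists_PC S).choose_spec.2.2.2.choose
theorem pf_surj [CN A] (S : Smp A) : Function.Surjective (pf S) :=
  (exists_PC S).choose_spec.2.2.2.choose_spec

theorem not_proj [CN A] (S : Smp A) : ¬ Module.Projective A S.1 := by
  intro h
  apply CN.nsp (A := A)
  refine ⟨S.1, S.2, ?_⟩
  exact (IsProjective.iff_projective (R := A) (P := S.1)).1 h

theorem exists_top [IsArtinianRing A] (M : Type) [AddCommGroup M] [Module A M] [Module.Finite A M]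
    [Nontrivial M] : ∃ T : Smp A, ∃ f : M →ₗ[A] T.1, Function.Surjective f := by
  obtain ⟨K, hK, -⟩ := (eq_top_or_exists_le_coatom (⊥ : Submodule A M)).resolve_left bot_ne_top
  exact ⟨⟨ModuleCat.of A (M ⧸ K), isSimpleModule_iff_isCoatom.2 hK⟩, K.mkQ, K.mkQ_surjective⟩

instance [CN A] (S : Smp A) : Nontrivial (LinearMap.ker (pf S)) := by
  rw [Submodule.nontrivial_iff_ne_bot]
  intro h
  apply not_proj S
  exact Module.Projective.of_equiv
    (LinearEquiv.ofBijective (pf S) ⟨LinearMap.ker_eq_bot.1 h, pf_surj S⟩)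

def tau [CN A] (S : Smp A) : Smp A := (exists_top (A := A) (LinearMap.ker (pf S))).choose
def tf [CN A] (S : Smp A) : LinearMap.ker (pf S) →ₗ[A] (tau S).1 :=
  (exists_top (A := A) (LinearMap.ker (pf S))).choose_spec.choose
theorem tf_surj [CN A] (S : Smp A) : Function.Surjective (tf S) :=
  (exists_top (A := A) (LinearMap.ker (pf S))).choose_spec.choose_spec

def cc [CN A] (S : Smp A) : ℕ := (Module.length A (PC S)).toNat

/-- `M` is uniserial with top `S` and length `l` -/
structure Uni (M : Type) [AddCommGroup M] [Module A M] (S : Smp A) (l : ℕ) : Prop where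
  chain : Chain A M
  len : Module.length A M = l
  top : ∃ f : M →ₗ[A] S.1, Function.Surjective f

section
variable [CN A]
variable {M N : Type} [AddCommGroup M] [Module A M] [AddCommGroup N] [Module A N]

theorem PC_uni (S : Smp A) : Uni (PC S) S (cc S) :=
  ⟨PC_chain S, (ENat.natCast_toNat (len_fin _)).symm, pf S, pf_surj S⟩

theorem Uni.fin {S : Smp A} {l : ℕ} (h : Uni M S l) : Module.length A M ≠ ⊤ := by
  rw [h.len]; exact ENat.natCast_ne_top l

theorem Uni.congr {S : Smp A} {l : ℕ} (h : Uni M S l) (e : M ≃ₗ[A] N) : Uni N S l := by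
  obtain ⟨f, hf⟩ := h.top
  exact ⟨h.chain.of_surj e.toLinearMap e.surjective, e.length_eq ▸ h.len,
    f ∘ₗ e.symm.toLinearMap, hf.comp e.symm.surjective⟩

theorem Uni.congr_top {S T : Smp A} {l : ℕ} (h : Uni M S l) (e : S.1 ≃ₗ[A] T.1) : Uni M T l := by
  obtain ⟨f, hf⟩ := h.top
  exact ⟨h.chain, h.len, e.toLinearMap ∘ₗ f, e.surjective.comp hf⟩

theorem Uni.top_unique {S T : Smp A} {l k : ℕ} (h : Uni M S l) (h' : Uni M T k) :
    Nonempty (S.1 ≃ₗ[A] T.1) := by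
  obtain ⟨f, hf⟩ := h.top
  obtain ⟨g, hg⟩ := h'.top
  obtain ⟨e, -⟩ := exists_equiv_of_ker_eq f hf g hg (h.chain.ker_eq f hf g hg)
  exact ⟨e⟩

theorem Uni.nontrivial {S : Smp A} {l : ℕ} (h : Uni M S l) : Nontrivial M := by
  obtain ⟨f, hf⟩ := h.top
  exact hf.nontrivial

theorem Uni.one_le {S : Smp A} {l : ℕ} (h : Uni M S l) : 1 ≤ l := by
  have := h.nontrivial
  have h1 := Module.length_pos (R := A) (M := M)
  rw [h.len] at h1
  exact_mod_cast h1

theorem lift_PC {S : Smp A} (f : M →ₗ[A] S.1) (hf : Function.Surjective f) :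
    ∃ q : PC S →ₗ[A] M, f ∘ₗ q = pf S :=
  Module.projective_lifting_property f (pf S) hf

theorem Uni.lift {S : Smp A} {l : ℕ} (h : Uni M S l) (f : M →ₗ[A] S.1)
    (hf : Function.Surjective f) :
    ∃ q : PC S →ₗ[A] M, f ∘ₗ q = pf S ∧ Function.Surjective q := by
  obtain ⟨q, hq⟩ := lift_PC f hf
  refine ⟨q, hq, h.chain.surj_of_comp f hf q ?_⟩
  rw [hq]
  exact ne_zero_of_surj _ (pf_surj S)

theorem Uni.finite {S : Smp A} {l : ℕ} (h : Uni M S l) : Module.Finite A M := by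
  obtain ⟨f, hf⟩ := h.top
  obtain ⟨q, -, hq⟩ := h.lift f hf
  exact Module.Finite.of_surjective q hq

theorem Uni.len_le {S : Smp A} {l : ℕ} (h : Uni M S l) : l ≤ cc S := by
  obtain ⟨f, hf⟩ := h.top
  obtain ⟨q, -, hq⟩ := h.lift f hf
  have := Module.length_le_of_surjective q hq
  rw [h.len, (PC_uni S).len] at this
  exact_mod_cast this

/-- length of the kernel of a surjection -/
theorem len_ker_nat {a b : ℕ} (f : M →ₗ[A] N) (hf : Function.Surjective f)
    (ha : Module.length A M = a) (hb : Module.length A N = b) :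
    Module.length A (LinearMap.ker f) = (a - b : ℕ) := by
  have h := len_ker f hf
  rw [ha, hb] at h
  have h1 : Module.length A (LinearMap.ker f) ≠ ⊤ := by
    intro h2; rw [h2] at h; simp at h
  obtain ⟨c, hc⟩ := ENat.ne_top_iff_exists.1 h1
  rw [← hc] at h ⊢
  have : a = c + b := by exact_mod_cast h
  congr 1
  omega

theorem len_quot_nat {a b : ℕ} (K : Submodule A M)
    (ha : Module.length A M = a) (hb : Module.length A K = b) :
    Module.length A (M ⧸ K) = (a - b : ℕ) := by
  have h := len_add K
  rw [ha, hb] at h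
  have h1 : Module.length A (M ⧸ K) ≠ ⊤ := by
    intro h2; rw [h2] at h; simp at h
  obtain ⟨c, hc⟩ := ENat.ne_top_iff_exists.1 h1
  rw [← hc] at h ⊢
  have : a = b + c := by exact_mod_cast h
  congr 1
  omega

/-- any two uniserial modules with the same top: the longer one surjects on the shorter one. -/
theorem Uni.exists_surj {S : Smp A} {l k : ℕ} (h : Uni M S l) (h' : Uni N S k) (hkl : k ≤ l)
    (f : M →ₗ[A] S.1) (hf : Function.Surjective f) (g : N →ₗ[A] S.1) (hg : Function.Surjective g) :
    ∃ p : M →ₗ[A] N, g ∘ₗ p = f ∧ Function.Surjective p := by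
  obtain ⟨q, hq, hqs⟩ := h.lift f hf
  obtain ⟨r, hr, hrs⟩ := h'.lift g hg
  have hle : LinearMap.ker q ≤ LinearMap.ker r := by
    apply (PC_chain S).le_of_len (PC_uni S).fin
    rw [len_ker_nat q hqs (PC_uni S).len h.len, len_ker_nat r hrs (PC_uni S).len h'.len]
    exact_mod_cast (by omega)
  obtain ⟨p, hp⟩ := exists_factor q hqs r hle
  refine ⟨p, ?_, ?_⟩
  · rw [← LinearMap.cancel_right hqs, LinearMap.comp_assoc, hp, hq, hr]
  · intro y
    obtain ⟨x, rfl⟩ := hrs y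
    exact ⟨q x, LinearMap.congr_fun hp x⟩

theorem Uni.equiv {S : Smp A} {l : ℕ} (h : Uni M S l) (h' : Uni N S l) :
    Nonempty (M ≃ₗ[A] N) := by
  obtain ⟨f, hf⟩ := h.top
  obtain ⟨g, hg⟩ := h'.top
  obtain ⟨p, -, hp⟩ := h.exists_surj h' le_rfl f hf g hg
  have h1 := len_ker_nat p hp h.len h'.len
  simp only [Nat.sub_self, Nat.cast_zero, Module.length_eq_zero_iff,
    Submodule.subsingleton_iff_eq_bot] at h1
  exact ⟨LinearEquiv.ofBijective p ⟨LinearMap.ker_eq_bot.1 h1, hp⟩⟩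

theorem Uni.rad {S : Smp A} {l : ℕ} (h : Uni M S l) (hl : 2 ≤ l) (f : M →ₗ[A] S.1)
    (hf : Function.Surjective f) : Uni (LinearMap.ker f) (tau S) (l - 1) := by
  refine ⟨h.chain.of_inj (LinearMap.ker f).subtype (Submodule.subtype_injective _), ?_, ?_⟩
  · have h1 : Module.length A S.1 = (1 : ℕ) := by
      rw [Module.length_eq_one]; rfl
    exact len_ker_nat f hf h.len h1
  · obtain ⟨q, hq, hqs⟩ := h.lift f hf
    have hq' : ∀ x, f (q x) = pf S x := fun x => LinearMap.congr_fun hq x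
    let q' : LinearMap.ker (pf S) →ₗ[A] LinearMap.ker f :=
      q.restrict (fun x hx => by rw [LinearMap.mem_ker, hq']; exact hx)
    have hq's : Function.Surjective q' := by
      rintro ⟨y, hy⟩
      obtain ⟨x, rfl⟩ := hqs y
      refine ⟨⟨x, ?_⟩, rfl⟩
      rw [LinearMap.mem_ker, ← hq']; exact hy
    have hne : LinearMap.ker q' ≠ ⊤ := by
      intro htop
      have h1 : Module.length A (LinearMap.ker f) = (l - 1 : ℕ) := by
        have h1 : Module.length A S.1 = (1 : ℕ) := by
          rw [Module.length_eq_one]; rfl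
        exact len_ker_nat f hf h.len h1
      have h2 : Module.length A (LinearMap.ker f) = 0 := by
        rw [Module.length_eq_zero_iff]
        refine ⟨fun a b => ?_⟩
        obtain ⟨a, rfl⟩ := hq's a
        obtain ⟨b, rfl⟩ := hq's b
        rw [LinearMap.ker_eq_top.1 htop]; rfl
      rw [h2] at h1
      have : 0 = l - 1 := by exact_mod_cast h1
      omega
    have hch : Chain A (LinearMap.ker (pf S)) :=
      (PC_chain S).of_inj (LinearMap.ker (pf S)).subtype (Submodule.subtype_injective _)
    obtain ⟨g, hg⟩ := exists_factor q' hq's (tf S) (hch.le_ker _ (tf_surj S) _ hne)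
    refine ⟨g, fun y => ?_⟩
    obtain ⟨x, rfl⟩ := tf_surj S y
    exact ⟨q' x, LinearMap.congr_fun hg x⟩

theorem cc_two_le (S : Smp A) : 2 ≤ cc S := by
  by_contra h
  have h1 : Module.length A S.1 = (1 : ℕ) := by
    rw [Module.length_eq_one]; rfl
  have h2 := len_ker_nat (pf S) (pf_surj S) (PC_uni S).len h1
  have h3 := Module.length_pos (R := A) (M := LinearMap.ker (pf S))
  rw [h2] at h3
  have : 0 < cc S - 1 := by exact_mod_cast h3
  omega

theorem cc_tau (S : Smp A) : cc S ≤ cc (tau S) + 1 := by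
  have := ((PC_uni S).rad (cc_two_le S) (pf S) (pf_surj S)).len_le
  omega

theorem Uni.exists_sub {S : Smp A} {l : ℕ} (h : Uni M S l) (k : ℕ) (hk : k < l) :
    ∃ K : Submodule A M, Uni K (tau^[k] S) (l - k) := by
  induction k with
  | zero => exact ⟨⊤, h.congr Submodule.topEquiv.symm⟩
  | succ k ih =>
    obtain ⟨K, hK⟩ := ih (by omega)
    obtain ⟨f, hf⟩ := hK.top
    have h1 := hK.rad (by omega) f hf
    refine ⟨(LinearMap.ker f).map K.subtype, ?_⟩
    rw [Function.iterate_succ_apply']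
    exact h1.congr (Submodule.equivMapOfInjective K.subtype (Submodule.subtype_injective _) _)

theorem Uni.quot {S : Smp A} {l k : ℕ} (h : Uni M S l) (K : Submodule A M)
    (hK : Module.length A K = k) (hkl : k < l) : Uni (M ⧸ K) S (l - k) := by
  refine ⟨h.chain.of_surj K.mkQ K.mkQ_surjective, len_quot_nat K h.len hK, ?_⟩
  obtain ⟨f, hf⟩ := h.top
  have hne : K ≠ ⊤ := by
    rintro rfl
    rw [Module.length_top, h.len] at hK
    have : l = k := by exact_mod_cast hK
    omega
  obtain ⟨g, hg⟩ := exists_factor K.mkQ K.mkQ_surjective f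
    (by rw [Submodule.ker_mkQ]; exact h.chain.le_ker f hf K hne)
  refine ⟨g, fun y => ?_⟩
  obtain ⟨x, rfl⟩ := hf y
  exact ⟨K.mkQ x, LinearMap.congr_fun hg x⟩

theorem exists_uni (S : Smp A) (l : ℕ) (h1 : 1 ≤ l) (h2 : l ≤ cc S) :
    ∃ M : ModuleCat.{0} A, Uni M S l := by
  rcases h2.eq_or_lt with h3 | h3
  · exact ⟨PC S, h3 ▸ PC_uni S⟩
  · obtain ⟨K, hK⟩ := (PC_uni S).exists_sub l h3
    refine ⟨ModuleCat.of A (PC S ⧸ K), ?_⟩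
    have := (PC_uni S).quot K hK.len (by omega)
    rwa [Nat.sub_sub_self h2] at this

theorem Uni.syz {S : Smp A} {l : ℕ} (h : Uni M S l) (hl : l < cc S) (q : PC S →ₗ[A] M)
    (hq : Function.Surjective q) : Uni (LinearMap.ker q) (tau^[l] S) (cc S - l) := by
  obtain ⟨K, hK⟩ := (PC_uni S).exists_sub l hl
  have : K = LinearMap.ker q := by
    apply (PC_chain S).eq_of_len (PC_uni S).fin
    rw [hK.len, len_ker_nat q hq (PC_uni S).len h.len]
  rwa [this] at hK

theorem Uni.proj_iff {S : Smp A} {l : ℕ} (h : Uni M S l) :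
    Module.Projective A M ↔ l = cc S := by
  constructor
  · intro hp
    obtain ⟨f, hf⟩ := h.top
    obtain ⟨q, -, hq⟩ := h.lift f hf
    obtain ⟨s, hs⟩ := Module.projective_lifting_property q LinearMap.id hq
    have := h.nontrivial
    have hi := (PC_chain S).inj_of q s (by rw [hs]; exact Function.injective_id)
    have e := (LinearEquiv.ofBijective q ⟨hi, hq⟩).length_eq
    rw [h.len, (PC_uni S).len] at e
    exact_mod_cast e.symm
  · rintro rfl
    obtain ⟨e⟩ := (PC_uni S).equiv h
    exact Module.Projective.of_equiv e

theorem uni_one_iff {S : Smp A} (h : Uni M S 1) : Nonempty (M ≃ₗ[A] S.1) := by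
  obtain ⟨f, hf⟩ := h.top
  have h1 : Module.length A S.1 = (1 : ℕ) := by
    rw [Module.length_eq_one]; rfl
  have h1 := len_ker_nat f hf h.len h1
  simp only [Nat.sub_self, Nat.cast_zero, Module.length_eq_zero_iff,
    Submodule.subsingleton_iff_eq_bot] at h1
  exact ⟨LinearEquiv.ofBijective f ⟨LinearMap.ker_eq_bot.1 h1, hf⟩⟩

theorem uni_simple (S : Smp A) : Uni S.1 S 1 := by
  refine ⟨fun a b => ?_, by rw [Module.length_eq_one]; rfl, LinearMap.id, Function.surjective_id⟩
  rcases eq_bot_or_eq_top a with rfl | rfl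
  · exact Or.inl bot_le
  · exact Or.inr le_top

/-- the socle -/
theorem Uni.exists_soc {S : Smp A} {l : ℕ} (h : Uni M S (l + 1)) :
    ∃ i : (tau^[l] S).1 →ₗ[A] M, Function.Injective i := by
  obtain ⟨K, hK⟩ := h.exists_sub l (by omega)
  rw [Nat.add_sub_cancel_left] at hK
  obtain ⟨e⟩ := uni_one_iff hK
  exact ⟨K.subtype ∘ₗ e.symm.toLinearMap, (Submodule.subtype_injective _).comp e.symm.injective⟩

theorem Uni.soc_unique {S T : Smp A} {l : ℕ} (h : Uni M S (l + 1)) (i : T.1 →ₗ[A] M)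
    (hi : Function.Injective i) : Nonempty (T.1 ≃ₗ[A] (tau^[l] S).1) := by
  obtain ⟨j, hj⟩ := h.exists_soc
  have h1 : LinearMap.range i = LinearMap.range j := by
    apply h.chain.eq_of_len h.fin
    rw [← (LinearEquiv.ofInjective i hi).length_eq, ← (LinearEquiv.ofInjective j hj).length_eq,
      Module.length_eq_one, Module.length_eq_one]
  exact ⟨(LinearEquiv.ofInjective i hi).trans ((LinearEquiv.ofEq _ _ h1).trans
    (LinearEquiv.ofInjective j hj).symm)⟩

theorem exists_uni_of_chain [Module.Finite A M] [Nontrivial M] (h : Chain A M) :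
    ∃ S : Smp A, ∃ l, Uni M S l := by
  obtain ⟨S, f, hf⟩ := exists_top (A := A) M
  exact ⟨S, _, h, (ENat.natCast_toNat (len_fin M)).symm, f, hf⟩

theorem cc_congr {S T : Smp A} (e : S.1 ≃ₗ[A] T.1) : cc S = cc T :=
  le_antisymm ((PC_uni S).congr_top e).len_le ((PC_uni T).congr_top e.symm).len_le

theorem tau_congr {S T : Smp A} (e : S.1 ≃ₗ[A] T.1) : Nonempty ((tau S).1 ≃ₗ[A] (tau T).1) := by
  have h1 := (PC_uni S).rad (cc_two_le S) (pf S) (pf_surj S)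
  have h2 := ((PC_uni S).congr_top e).rad (cc_two_le S) (e.toLinearMap ∘ₗ pf S)
    (e.surjective.comp (pf_surj S))
  have h3 : LinearMap.ker (e.toLinearMap ∘ₗ pf S) = LinearMap.ker (pf S) :=
    LinearEquiv.ker_comp e (pf S)
  rw [h3] at h2
  exact h1.top_unique h2

theorem tau_iter_congr {S T : Smp A} (e : S.1 ≃ₗ[A] T.1) (k : ℕ) :
    Nonempty ((tau^[k] S).1 ≃ₗ[A] (tau^[k] T).1) := by
  induction k with
  | zero => exact ⟨e⟩
  | succ k ih =>
    obtain ⟨e'⟩ := ih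
    rw [Function.iterate_succ_apply', Function.iterate_succ_apply']
    exact tau_congr e'

end
end NakAux

set_option linter.unusedSectionVars false
namespace NakAux
open ArtinAlg

variable {A : Type} [Ring A] [CN A]

section ext
variable {M N : Type} [AddCommGroup M] [Module A M] [AddCommGroup N] [Module A N]

theorem ext_or [Module.Finite A M] [Module.Finite A N] (hN : Chain A N) (L : Submodule A M)
    (hL : IsCoatom L) (f : L →ₗ[A] N) :
    (∃ F : M →ₗ[A] N, ∀ x : L, F x = f x) ∨
    ∃ X : ModuleCat.{0} A, Chain A X ∧ Module.Finite A X ∧ ∃ (j : N →ₗ[A] X) (g : M →ₗ[A] X),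
      Function.Injective j ∧ (∀ x : L, g x = j (f x)) ∧ IsCoatom (LinearMap.range j) ∧
      LinearMap.range j ⊔ LinearMap.range g = ⊤ := by
  let K : Submodule A (N × M) := LinearMap.range (f.prod (-L.subtype))
  let j : N →ₗ[A] ((N × M) ⧸ K) := K.mkQ ∘ₗ LinearMap.inl A N M
  let g : M →ₗ[A] ((N × M) ⧸ K) := K.mkQ ∘ₗ LinearMap.inr A N M
  have hj : Function.Injective j := by
    rw [← LinearMap.ker_eq_bot, eq_bot_iff]
    intro n hn
    have : ((n, 0) : N × M) ∈ K := by
      simpa [j] using hn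
    obtain ⟨l, hl⟩ := this
    have h1 : f l = n := congrArg Prod.fst hl
    have h2 : -(l : M) = 0 := congrArg Prod.snd hl
    have h3 : l = 0 := by
      ext; simpa using h2
    rw [← h1, h3, map_zero]; exact Submodule.zero_mem _
  have hg : ∀ x : L, g x = j (f x) := by
    intro x
    change K.mkQ (0, (x : M)) = K.mkQ (f x, 0)
    rw [← sub_eq_zero, ← map_sub, Submodule.mkQ_apply, Submodule.Quotient.mk_eq_zero]
    refine ⟨-x, ?_⟩
    simp
  have hsup : LinearMap.range j ⊔ LinearMap.range g = ⊤ := by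
    rw [eq_top_iff]
    rintro x -
    obtain ⟨⟨n, m⟩, rfl⟩ := K.mkQ_surjective x
    have : K.mkQ (n, m) = j n + g m := by
      simp only [j, g, LinearMap.comp_apply, ← map_add]
      simp
    rw [this]
    exact Submodule.add_mem_sup ⟨n, rfl⟩ ⟨m, rfl⟩
  have hco : IsCoatom (LinearMap.range j) := by
    have : IsSimpleModule A (M ⧸ L) := isSimpleModule_iff_isCoatom.2 hL
    have hle : K ≤ LinearMap.ker (L.mkQ ∘ₗ LinearMap.snd A N M) := by
      rintro _ ⟨l, rfl⟩
      simp
    let π : ((N × M) ⧸ K) →ₗ[A] M ⧸ L := Submodule.liftQ K (L.mkQ ∘ₗ LinearMap.snd A N M) hle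
    have hπ : Function.Surjective π := by
      intro y
      obtain ⟨m, rfl⟩ := L.mkQ_surjective y
      exact ⟨K.mkQ (0, m), by simp [π]⟩
    have hker : LinearMap.ker π = LinearMap.range j := by
      apply le_antisymm
      · intro x hx
        obtain ⟨⟨n, m⟩, rfl⟩ := K.mkQ_surjective x
        have hm : m ∈ L := by simpa [π] using hx
        have : K.mkQ (n, m) = j n + g m := by
          simp only [j, g, LinearMap.comp_apply, ← map_add]
          simp
        rw [this]
        have h2 := hg ⟨m, hm⟩
        simp only at h2
        rw [h2, ← map_add]
        exact ⟨_, rfl⟩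
      · rintro _ ⟨n, rfl⟩
        simp [π, j]
    rw [← hker]
    exact ker_isCoatom π hπ
  by_cases hF : ∃ F : M →ₗ[A] N, ∀ x : L, F x = f x
  · exact Or.inl hF
  right
  refine ⟨ModuleCat.of A ((N × M) ⧸ K), ?_, ?_, j, g, hj, hg, hco, hsup⟩
  swap
  · change Module.Finite A ((N × M) ⧸ K)
    infer_instance
  apply chain_of_indec
  refine ⟨?_, ?_⟩
  · change Nontrivial ((N × M) ⧸ K)
    by_contra hnt
    rw [not_nontrivial_iff_subsingleton] at hnt
    exact hco.1 (Subsingleton.elim _ _)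
  have key : ∀ N₁ : Submodule A ((N × M) ⧸ K), N₁ ⊓ LinearMap.range j = ⊥ → N₁ = ⊥ := by
    intro N₁ h1
    by_contra hne
    apply hF
    have hc : IsCompl (LinearMap.range j) N₁ := by
      refine IsCompl.of_eq (by rwa [inf_comm]) ?_
      rcases hco.le_iff.1 (le_sup_left : LinearMap.range j ≤ LinearMap.range j ⊔ N₁) with h2 | h2
      · exact h2
      · exfalso
        apply hne
        rw [← h1, eq_comm, inf_eq_left]
        exact le_sup_right.trans h2.le
    let r : ((N × M) ⧸ K) →ₗ[A] N :=
      (LinearEquiv.ofInjective j hj).symm.toLinearMap ∘ₗ (LinearMap.range j).projectionOnto N₁ hc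
    have hr : ∀ n, r (j n) = n := by
      intro n
      have : (LinearMap.range j).projectionOnto N₁ hc (j n) = ⟨j n, ⟨n, rfl⟩⟩ :=
        Submodule.projectionOnto_apply_left hc ⟨j n, ⟨n, rfl⟩⟩
      simp only [r, LinearMap.comp_apply, this]
      rw [LinearEquiv.coe_coe, LinearEquiv.symm_apply_eq]
      rfl
    refine ⟨r ∘ₗ g, fun x => ?_⟩
    rw [LinearMap.comp_apply, hg, hr]
  intro N₁ N₂ hc
  change Submodule A ((N × M) ⧸ K) at N₁
  change Submodule A ((N × M) ⧸ K) at N₂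
  have aux : ∀ N₁ N₂ : Submodule A ((N × M) ⧸ K), N₁ ⊓ N₂ = ⊥ → N₁.comap j ≤ N₂.comap j →
      N₁ ⊓ LinearMap.range j = ⊥ := by
    intro N₁ N₂ h1 h2
    rw [eq_bot_iff]
    rintro x ⟨hx1, n, rfl⟩
    rw [← h1]
    exact ⟨hx1, h2 hx1⟩
  rcases hN (N₁.comap j) (N₂.comap j) with h | h
  · exact Or.inl (key _ (aux _ _ hc.inf_eq_bot h))
  · exact Or.inr (key _ (aux _ _ (by rw [inf_comm]; exact hc.inf_eq_bot) h))

/-- maps between modules with small length extend -/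
theorem ext_of_len [Module.Finite A M] [Module.Finite A N] (hN : Chain A N) (L : Submodule A M)
    (hL : IsCoatom L) (f : L →ₗ[A] N) (hlen : Module.length A M ≤ Module.length A N) :
    ∃ F : M →ₗ[A] N, ∀ x : L, F x = f x := by
  rcases ext_or hN L hL f with h | ⟨X, hX, hXf, j, g, hj, hg, hco, hsup⟩
  · exact h
  rcases hX (LinearMap.range g) (LinearMap.range j) with h | h
  · refine ⟨(LinearEquiv.ofInjective j hj).symm.toLinearMap ∘ₗ
      (Submodule.inclusion h) ∘ₗ g.rangeRestrict, fun x => ?_⟩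
    simp only [LinearMap.comp_apply]
    rw [LinearEquiv.coe_coe, LinearEquiv.symm_apply_eq]
    ext
    simpa using hg x
  · exfalso
    rw [sup_eq_right.2 h, LinearMap.range_eq_top] at hsup
    have h1 := Module.length_le_of_surjective g hsup
    have h2 : Module.length A N < Module.length A X := by
      rw [(LinearEquiv.ofInjective j hj).length_eq]
      exact Submodule.length_lt hco.1
    exact absurd (h2.trans_le h1) (not_lt.2 hlen)

end ext

theorem tau_inj {U V : Smp A} (e : (tau U).1 ≃ₗ[A] (tau V).1) : Nonempty (U.1 ≃ₗ[A] V.1) := by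
  obtain ⟨EU, hU⟩ := exists_uni U 2 (by norm_num) (cc_two_le U)
  obtain ⟨EV, hV⟩ := exists_uni V 2 (by norm_num) (cc_two_le V)
  obtain ⟨i, hi⟩ := hU.exists_soc (l := 1)
  obtain ⟨f, hf⟩ := hV.top
  have hr := hV.rad le_rfl f hf
  obtain ⟨e'⟩ := uni_one_iff hr
  have := hU.finite
  have := hV.finite
  obtain ⟨F, hF⟩ := ext_of_len hU.chain (LinearMap.ker f) (ker_isCoatom f hf)
    (i ∘ₗ e.symm.toLinearMap ∘ₗ e'.toLinearMap) (by rw [hU.len, hV.len])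
  have : Nontrivial (LinearMap.ker f) := hr.nontrivial
  have hFi : Function.Injective F := by
    apply hV.chain.inj_of F (LinearMap.ker f).subtype
    have : F ∘ₗ (LinearMap.ker f).subtype = i ∘ₗ e.symm.toLinearMap ∘ₗ e'.toLinearMap :=
      LinearMap.ext fun x => hF x
    rw [this]
    exact hi.comp (e.symm.injective.comp e'.injective)
  have hFs : Function.Surjective F := by
    rw [← LinearMap.range_eq_top]
    apply hU.chain.eq_of_len hU.fin
    rw [← (LinearEquiv.ofInjective F hFi).length_eq, Module.length_top, hU.len, hV.len]
  exact hU.top_unique (hV.congr (LinearEquiv.ofBijective F ⟨hFi, hFs⟩))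

/-- uniserial modules of sufficient length are injective -/
theorem Uni.injective {I : Type} [AddCommGroup I] [Module A I] {U : Smp A} {y : ℕ}
    (h : Uni I (tau U) y) (hy : cc U ≤ y) : Module.Injective A I := by
  apply Module.Baer.injective
  have hIf := h.finite
  intro L f
  -- choose a maximal extension
  let s : Set (Submodule A A) := {L' | L ≤ L' ∧ ∃ F : L' →ₗ[A] I, ∀ (x : A) (hx : x ∈ L)
    (hx' : x ∈ L'), F ⟨x, hx'⟩ = f ⟨x, hx⟩}
  have hs : s.Nonempty := ⟨L, le_rfl, f, fun x hx hx' => rfl⟩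
  obtain ⟨L', hL', hmax⟩ := WellFounded.has_min
    (wellFounded_gt (α := Submodule A A)) s hs
  obtain ⟨hLL, F, hF⟩ := hL'
  by_cases htop : L' = ⊤
  · subst htop
    refine ⟨F ∘ₗ Submodule.topEquiv.symm.toLinearMap, fun x hx => ?_⟩
    exact hF x hx trivial
  exfalso
  -- cover
  obtain ⟨L'', hcov⟩ : ∃ L'', L' ⋖ L'' := by
    obtain ⟨L'', h1, h2⟩ := exists_covBy_le_of_lt (lt_top_iff_ne_top.2 htop)
    exact ⟨L'', h1⟩
  have hco : IsCoatom (L'.comap L''.subtype) := by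
    have := (covBy_iff_quot_is_simple hcov.le).1 hcov
    exact isSimpleModule_iff_isCoatom.1 this
  let e := Submodule.comapSubtypeEquivOfLe hcov.le
  rcases ext_or (M := L'') h.chain _ hco (F ∘ₗ e.toLinearMap) with ⟨G, hG⟩ | hX
  · apply hmax L'' ⟨hLL.trans hcov.le, G, fun x hx hx' => ?_⟩ hcov.lt
    have := hG ⟨⟨x, hx'⟩, hLL hx⟩
    simp only at this
    rw [this, ← hF x hx (hLL hx)]
    rfl
  · obtain ⟨X, hX, hXf, j, -, hj, -, hco, -⟩ := hX
    let V : Smp A := ⟨ModuleCat.of A (X ⧸ LinearMap.range j), isSimpleModule_iff_isCoatom.2 hco⟩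
    let π : X →ₗ[A] V.1 := (LinearMap.range j).mkQ
    have hπ : Function.Surjective π := (LinearMap.range j).mkQ_surjective
    have hker : LinearMap.ker π = LinearMap.range j := Submodule.ker_mkQ _
    obtain ⟨l, hl⟩ := ENat.ne_top_iff_exists.1 (len_fin (A := A) X)
    have hXu : Uni X V l := ⟨hX, hl.symm, π, hπ⟩
    have hlen := len_ker π hπ
    rw [hker, ← (LinearEquiv.ofInjective j hj).length_eq, h.len, ← hl, (uni_simple V).len] at hlen
    have hlen' : l = y + 1 := by exact_mod_cast hlen
    have hy1 := h.one_le
    have hr := hXu.rad (by omega) π hπ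
    rw [hker] at hr
    have hr' := hr.congr (LinearEquiv.ofInjective j hj).symm
    obtain ⟨e1⟩ := hr'.top_unique h
    obtain ⟨e2⟩ := tau_inj e1
    have := hXu.len_le
    rw [cc_congr e2] at this
    omega

end NakAux

set_option linter.unusedSectionVars false
namespace NakAux
open ArtinAlg

variable {A : Type} [Ring A] [CN A]

section as
variable {E : Type} [AddCommGroup E] [Module A E] {U : Smp A}

theorem as_fg (hE : Uni E U 2) (g : E →ₗ[A] U.1) (hg : Function.Surjective g)
    (X : Type) [AddCommGroup X] [Module A X] [Module.Finite A X] (h : X →ₗ[A] U.1) :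
    (∃ s : U.1 →ₗ[A] X, h ∘ₗ s = LinearMap.id) ∨ ∃ h' : X →ₗ[A] E, g ∘ₗ h' = h := by
  revert h
  refine decomp_ind (A := A) (fun X _ _ => ∀ h : X →ₗ[A] U.1,
    (∃ s : U.1 →ₗ[A] X, h ∘ₗ s = LinearMap.id) ∨ ∃ h' : X →ₗ[A] E, g ∘ₗ h' = h) ?_ ?_ ?_ X
  · intro X _ _ hX h
    right
    exact ⟨0, LinearMap.ext fun x => by rw [Subsingleton.elim x 0]; simp⟩
  · intro X _ _ hf hn hc h
    by_cases h0 : h = 0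
    · right
      exact ⟨0, by rw [h0]; simp⟩
    have hs := surj_of_ne_zero h h0
    obtain ⟨l, hl⟩ := ENat.ne_top_iff_exists.1 (len_fin (A := A) X)
    have hu : Uni X U l := ⟨hc, hl.symm, h, hs⟩
    by_cases hl2 : 2 ≤ l
    · right
      obtain ⟨p, hp, -⟩ := hu.exists_surj hE hl2 h hs g hg
      exact ⟨p, hp⟩
    · left
      have h1 : l = 1 := by have := hu.one_le; omega
      subst h1
      have h2 := len_ker_nat h hs hu.len (uni_simple U).len
      simp only [Nat.sub_self, Nat.cast_zero, Module.length_eq_zero_iff,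
        Submodule.subsingleton_iff_eq_bot] at h2
      let e := LinearEquiv.ofBijective h ⟨LinearMap.ker_eq_bot.1 h2, hs⟩
      exact ⟨e.symm.toLinearMap, LinearMap.ext fun x => e.apply_symm_apply x⟩
  · intro X _ _ N₁ N₂ hc q1 q2 h
    rcases q1 (h ∘ₗ N₁.subtype) with ⟨s, hs⟩ | ⟨k1, hk1⟩
    · left; exact ⟨N₁.subtype ∘ₗ s, hs⟩
    rcases q2 (h ∘ₗ N₂.subtype) with ⟨s, hs⟩ | ⟨k2, hk2⟩
    · left; exact ⟨N₂.subtype ∘ₗ s, hs⟩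
    right
    refine ⟨k1 ∘ₗ N₁.projectionOnto N₂ hc + k2 ∘ₗ N₂.projectionOnto N₁ hc.symm, ?_⟩
    ext x
    have e1 := LinearMap.congr_fun hk1 (N₁.projectionOnto N₂ hc x)
    have e2 := LinearMap.congr_fun hk2 (N₂.projectionOnto N₁ hc.symm x)
    simp only [LinearMap.comp_apply, LinearMap.add_apply, map_add, Submodule.subtype_apply] at e1 e2 ⊢
    rw [e1, e2, ← map_add]
    congr 1
    have := Submodule.projection_add_projection_eq_self hc x
    simpa using this

theorem semisimple_quot (K : Type) [AddCommGroup K] [Module A K] :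
    IsSemisimpleModule A (K ⧸ (Ring.jacobson A • (⊤ : Submodule A K))) := by
  have h : Module.IsTorsionBySet A (K ⧸ (Ring.jacobson A • (⊤ : Submodule A K)))
      (Ring.jacobson A) := by
    rw [Module.isTorsionBySet_quotient_iff]
    exact fun m i hi ↦ Submodule.smul_mem_smul hi trivial
  let _ := h.module
  exact (h.semilinearMap.isSemisimpleModule_iff_of_bijective Function.bijective_id).2
      inferInstance

theorem as_gen (hE : Uni E U 2) (g : E →ₗ[A] U.1) (hg : Function.Surjective g)
    (X : Type) [AddCommGroup X] [Module A X] (h : X →ₗ[A] U.1)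
    (hns : ¬ ∃ s : U.1 →ₗ[A] X, h ∘ₗ s = LinearMap.id) : ∃ h' : X →ₗ[A] E, g ∘ₗ h' = h := by
  by_cases h0 : h = 0
  · exact ⟨0, by rw [h0]; simp⟩
  have hs := surj_of_ne_zero h h0
  obtain ⟨q, hq⟩ := lift_PC h hs
  obtain ⟨r, hr, hrs⟩ := hE.lift g hg
  have hq' : ∀ z, h (q z) = pf U z := fun z => LinearMap.congr_fun hq z
  have hr' : ∀ z, g (r z) = pf U z := fun z => LinearMap.congr_fun hr z
  let B := LinearMap.ker (pf U)
  let K := LinearMap.ker h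
  let W := LinearMap.ker g
  have hW := hE.rad le_rfl g hg
  have hWs : IsSimpleModule A W := by
    obtain ⟨e⟩ := uni_one_iff hW
    exact IsSimpleModule.congr e
  let qB : B →ₗ[A] K := q.restrict (fun x hx => by rw [LinearMap.mem_ker, hq']; exact hx)
  let rB : B →ₗ[A] W := r.restrict (fun x hx => by rw [LinearMap.mem_ker, hr']; exact hx)
  have hrBs : Function.Surjective rB := by
    rintro ⟨y, hy⟩
    obtain ⟨x, rfl⟩ := hrs y
    refine ⟨⟨x, ?_⟩, rfl⟩
    rw [LinearMap.mem_ker, ← hr']; exact hy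
  have hBc : Chain A B := (PC_chain U).of_inj B.subtype (Submodule.subtype_injective _)
  -- reduction to the existence of a map nonzero on B
  suffices hμ : ∃ μ : K →ₗ[A] W, μ ∘ₗ qB ≠ 0 by
    obtain ⟨μ, hμ⟩ := hμ
    have hμs := surj_of_ne_zero _ hμ
    obtain ⟨α, hα⟩ := exists_equiv_of_ker_eq _ hμs rB hrBs (hBc.ker_eq _ hμs _ hrBs)
    let lam : K →ₗ[A] E := W.subtype ∘ₗ α.toLinearMap ∘ₗ μ
    let P1 : (PC U × K) →ₗ[A] X := q.coprod K.subtype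
    let P2 : (PC U × K) →ₗ[A] E := r.coprod lam
    have hP1 : Function.Surjective P1 := by
      intro x
      obtain ⟨z, hz⟩ := pf_surj U (h x)
      refine ⟨(z, ⟨x - q z, ?_⟩), ?_⟩
      · rw [LinearMap.mem_ker, map_sub, hq', hz, sub_self]
      · simp [P1]
    have hle : LinearMap.ker P1 ≤ LinearMap.ker P2 := by
      rintro ⟨z, k⟩ hzk
      have h1 : q z + (k : X) = 0 := by simpa [P1] using hzk
      have hz : z ∈ B := by
        rw [LinearMap.mem_ker, ← hq']
        have h2 : h (q z + (k : X)) = 0 := by rw [h1, map_zero]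
        rwa [map_add, LinearMap.mem_ker.1 k.2, add_zero] at h2
      have hk : k = - qB ⟨z, hz⟩ := by
        ext
        have : (k : X) = - q z := by rw [eq_neg_iff_add_eq_zero, add_comm]; exact h1
        simpa [qB] using this
      have h3 := hα ⟨z, hz⟩
      have h4 : lam k = - r z := by
        rw [hk, map_neg]
        simp only [lam, LinearMap.comp_apply] at h3 ⊢
        rw [LinearEquiv.coe_coe, h3]
        rfl
      rw [LinearMap.mem_ker]
      simp [P2, h4]
    obtain ⟨h', hh'⟩ := exists_factor P1 hP1 P2 hle
    refine ⟨h', ?_⟩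
    rw [← LinearMap.cancel_right hP1, LinearMap.comp_assoc, hh']
    ext z
    · simp [P1, P2, hq', hr']
    · have h5 : g (lam z) = 0 := (α (μ z)).2
      simp [P1, P2, h5]
  -- existence of μ
  have hWnt : Nontrivial W := IsSimpleModule.nontrivial A W
  obtain ⟨w, hw⟩ := exists_ne (0 : W)
  obtain ⟨b, hb⟩ := hrBs w
  by_cases hJ : qB b ∈ Ring.jacobson A • (⊤ : Submodule A K)
  · exfalso
    -- a finitely generated submodule
    have hfg : ∃ K₀ : Submodule A K, K₀.FG ∧ qB b ∈ Ring.jacobson A • K₀ := by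
      refine Submodule.smul_induction_on hJ ?_ ?_
      · intro a ha k _
        refine ⟨Submodule.span A {k}, Submodule.fg_span_singleton k, ?_⟩
        exact Submodule.smul_mem_smul ha (Submodule.mem_span_singleton_self k)
      · rintro x y ⟨K₁, h1, h1'⟩ ⟨K₂, h2, h2'⟩
        refine ⟨K₁ ⊔ K₂, h1.sup h2, Submodule.add_mem _ ?_ ?_⟩
        · exact Submodule.smul_mono le_rfl le_sup_left h1'
        · exact Submodule.smul_mono le_rfl le_sup_right h2'
    obtain ⟨K₀, hK₀, hbK⟩ := hfg
    let X₀ : Submodule A X := LinearMap.range q ⊔ K₀.map K.subtype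
    have hX₀ : Module.Finite A X₀ := by
      rw [Module.Finite.iff_fg]
      refine Submodule.FG.sup ?_ (hK₀.map _)
      rw [← Module.Finite.iff_fg]
      infer_instance
    rcases as_fg hE g hg X₀ (h ∘ₗ X₀.subtype) with ⟨s, hs⟩ | ⟨h', hh'⟩
    · exact hns ⟨X₀.subtype ∘ₗ s, hs⟩
    · have hh : ∀ x : X₀, g (h' x) = h x := fun x => LinearMap.congr_fun hh' x
      -- restrict h' to K₀, landing in W
      let i₀ : K₀ →ₗ[A] X₀ := (K.subtype ∘ₗ K₀.subtype).codRestrict X₀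
        (fun x => le_sup_right (a := LinearMap.range q) ⟨x, x.2, rfl⟩)
      let k₀ : K₀ →ₗ[A] W := (h' ∘ₗ i₀).codRestrict W (fun x => by
        rw [LinearMap.mem_ker]
        have := hh (i₀ x)
        simp only [LinearMap.comp_apply]
        rw [this]
        exact (x : K).2)
      have hz : ∀ x : K, x ∈ Ring.jacobson A • K₀ → ∃ hx : x ∈ K₀, k₀ ⟨x, hx⟩ = 0 := by
        intro x hx
        refine Submodule.smul_induction_on hx ?_ ?_
        · intro a ha n hn
          refine ⟨K₀.smul_mem a hn, ?_⟩
          have : k₀ ⟨a • n, K₀.smul_mem a hn⟩ = a • k₀ ⟨n, hn⟩ := by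
            rw [← map_smul]; rfl
          rw [this]
          have hann := IsSemisimpleModule.jacobson_le_annihilator A W ha
          exact Module.mem_annihilator.1 hann _
        · rintro x y ⟨hx, h1⟩ ⟨hy, h2⟩
          refine ⟨K₀.add_mem hx hy, ?_⟩
          have : k₀ ⟨x + y, K₀.add_mem hx hy⟩ = k₀ ⟨x, hx⟩ + k₀ ⟨y, hy⟩ := by
            rw [← map_add]; rfl
          rw [this, h1, h2, add_zero]
      obtain ⟨hbK₀, hb0⟩ := hz _ hbK
      -- the map PC U → E obtained from h'
      let q₀ : PC U →ₗ[A] X₀ := q.codRestrict X₀ (fun x => le_sup_left (b := K₀.map K.subtype) ⟨x, rfl⟩)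
      let r₂ : PC U →ₗ[A] E := h' ∘ₗ q₀
      have hr₂ : ∀ z, g (r₂ z) = pf U z := fun z => by
        have := hh (q₀ z)
        simp only [r₂, LinearMap.comp_apply]
        rw [this, ← hq']
        rfl
      have hr₂s : Function.Surjective r₂ := by
        apply hE.chain.surj_of_comp g hg
        have : g ∘ₗ r₂ = pf U := LinearMap.ext hr₂
        rw [this]
        exact ne_zero_of_surj _ (pf_surj U)
      have hker : LinearMap.ker r = LinearMap.ker r₂ := by
        apply (PC_chain U).eq_of_len (PC_uni U).fin
        rw [len_ker_nat r hrs (PC_uni U).len hE.len, len_ker_nat r₂ hr₂s (PC_uni U).len hE.len]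
      have h6 : (b : PC U) ∈ LinearMap.ker r₂ := by
        have h7 : (k₀ ⟨qB b, hbK₀⟩ : E) = 0 := by rw [hb0]; rfl
        exact h7
      rw [← hker] at h6
      apply hw
      rw [← hb]
      ext
      exact h6
  · -- semisimple quotient
    let J := Ring.jacobson A • (⊤ : Submodule A K)
    have hss := semisimple_quot (A := A) K
    let t : B →ₗ[A] (K ⧸ J) := J.mkQ ∘ₗ qB
    have ht : t b ≠ 0 := by
      intro h1
      apply hJ
      exact (Submodule.Quotient.mk_eq_zero J).1 h1
    have hrange : Chain A (LinearMap.range t) :=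
      hBc.of_surj t.rangeRestrict t.surjective_rangeRestrict
    have hsimple : IsSimpleModule A (LinearMap.range t) := by
      have : Nontrivial (LinearMap.range t) := ⟨⟨t b, b, rfl⟩, 0, fun h => ht (congrArg Subtype.val h)⟩
      rw [isSimpleModule_iff]
      refine { exists_pair_ne := ⟨⊥, ⊤, bot_ne_top⟩, eq_bot_or_eq_top := fun N => ?_ }
      obtain ⟨N', hN'⟩ := exists_isCompl N
      rcases (hrange.indec).2 N N' hN' with h | h
      · exact Or.inl h
      · right
        have h8 : N' = ⊥ := h
        rw [h8] at hN'
        exact eq_top_of_isCompl_bot hN'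
    obtain ⟨C, hC⟩ := exists_isCompl (LinearMap.range t)
    obtain ⟨e, he⟩ := exists_equiv_of_ker_eq t.rangeRestrict t.surjective_rangeRestrict rB hrBs
      (hBc.ker_eq _ t.surjective_rangeRestrict _ hrBs)
    refine ⟨e.toLinearMap ∘ₗ (LinearMap.range t).projectionOnto C hC ∘ₗ J.mkQ, fun h9 => ?_⟩
    have h10 := LinearMap.congr_fun h9 b
    have h11 : (LinearMap.range t).projectionOnto C hC (J.mkQ (qB b)) = t.rangeRestrict b :=
      Submodule.projectionOnto_apply_left hC (t.rangeRestrict b)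
    simp only [LinearMap.comp_apply, h11, LinearEquiv.coe_coe, he] at h10
    exact hw (by rw [← hb, h10]; rfl)

end as

theorem indec_simple (S : Smp A) : Indec A S.1 := (uni_simple S).chain.indec

theorem isTau (U : Smp A) : IsTauOf A (tau U).1 U.1 := by
  obtain ⟨E, hE⟩ := exists_uni U 2 (by norm_num) (cc_two_le U)
  obtain ⟨g, hg⟩ := hE.top
  obtain ⟨e⟩ := uni_one_iff (hE.rad le_rfl g hg)
  have e : (tau U).1 ≃ₗ[A] LinearMap.ker g := e.symm
  let f : (tau U).1 →ₗ[A] E := (LinearMap.ker g).subtype ∘ₗ e.toLinearMap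
  have hf : Function.Injective f := (Submodule.subtype_injective _).comp e.injective
  have hfr : LinearMap.range f = LinearMap.ker g := by
    rw [LinearMap.range_comp, LinearEquiv.range, Submodule.map_top, Submodule.range_subtype]
  refine ⟨E, ModuleCat.ofHom f, ModuleCat.ofHom g, ?_, ?_, ?_, ?_, indec_simple _, indec_simple _, ?_⟩
  · rw [ModuleCat.mono_iff_injective]; exact hf
  · rw [ModuleCat.epi_iff_surjective]; exact hg
  · refine ⟨?_, ?_⟩
    · ext x
      exact (e x).2
    · rw [ShortComplex.moduleCat_exact_iff_range_eq_ker]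
      exact hfr
  · rintro ⟨s, hs⟩
    have hs' : ∀ x, g (s.hom x) = x := fun x => by
      have := congrArg (fun k => k.hom x) hs
      simpa using this
    have hinj : Function.Injective (g ∘ₗ s.hom) := by
      intro x y hxy
      simpa [hs'] using hxy
    have h1 := hE.chain.inj_of g s.hom hinj
    have h2 := (LinearEquiv.ofBijective g ⟨h1, hg⟩).length_eq
    rw [hE.len, (uni_simple U).len] at h2
    exact absurd h2 (by norm_cast)
  · intro X h hns
    obtain ⟨h', hh'⟩ := as_gen hE g hg X h.hom (by
      rintro ⟨s, hs⟩
      apply hns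
      refine ⟨ModuleCat.ofHom s, ?_⟩
      ext x
      exact LinearMap.congr_fun hs x)
    refine ⟨ModuleCat.ofHom h', ?_⟩
    ext x
    exact LinearMap.congr_fun hh' x

theorem tau_of_isTau {W U : Smp A} (h : IsTauOf A W.1 U.1) :
    Nonempty (W.1 ≃ₗ[A] (tau U).1) := by
  obtain ⟨E, f, g, hf, hg, ⟨w, hex⟩, hns, -⟩ := h
  rw [ModuleCat.mono_iff_injective] at hf
  rw [ModuleCat.epi_iff_surjective] at hg
  rw [ShortComplex.moduleCat_exact_iff_range_eq_ker] at hex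
  have hex : LinearMap.range f.hom = LinearMap.ker g.hom := hex
  obtain ⟨q, hq⟩ := lift_PC g.hom hg
  have hlen : Module.length A E = (2 : ℕ) := by
    rw [len_ker g.hom hg, ← hex, ← (LinearEquiv.ofInjective f.hom hf).length_eq,
      (uni_simple U).len, (uni_simple W).len]
    norm_cast
  have hqs : Function.Surjective q := by
    have hat : IsAtom (LinearMap.range f.hom) := by
      rw [← isSimpleModule_iff_isAtom]
      exact IsSimpleModule.congr (LinearEquiv.ofInjective f.hom hf).symm
    rcases hat.le_iff.1 (inf_le_left : LinearMap.range f.hom ⊓ LinearMap.range q ≤ _) with h | h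
    · exfalso
      apply hns
      have hker : LinearMap.ker (pf U) ≤ LinearMap.ker q := by
        intro z hz
        have : q z ∈ LinearMap.range f.hom ⊓ LinearMap.range q := by
          refine ⟨?_, z, rfl⟩
          rw [hex]
          change q z ∈ LinearMap.ker g.hom
          rw [LinearMap.mem_ker]
          have := LinearMap.congr_fun hq z
          simp only [LinearMap.comp_apply] at this
          rw [this]; exact hz
        rw [h] at this
        exact this
      obtain ⟨s, hs⟩ := exists_factor (pf U) (pf_surj U) q hker
      refine ⟨ModuleCat.ofHom s, ?_⟩
      ext x
      obtain ⟨z, rfl⟩ := pf_surj U x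
      have h1 := LinearMap.congr_fun hs z
      have h2 := LinearMap.congr_fun hq z
      simp only [LinearMap.comp_apply] at h1 h2
      simp [h1, h2]
    · have h1 : LinearMap.range f.hom ≤ LinearMap.range q := inf_eq_left.1 h
      intro y
      obtain ⟨z, hz⟩ := pf_surj U (g.hom y)
      have h2 := LinearMap.congr_fun hq z
      simp only [LinearMap.comp_apply] at h2
      have h3 : y - q z ∈ LinearMap.range q := by
        apply h1
        rw [hex, LinearMap.mem_ker, map_sub, h2, hz, sub_self]
      obtain ⟨z', hz'⟩ := h3
      exact ⟨z' + z, by rw [map_add, hz']; abel⟩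
  have hE : Uni E U 2 := ⟨(PC_chain U).of_surj q hqs, hlen, g.hom, hg⟩
  have hr := hE.rad le_rfl g.hom hg
  rw [← hex] at hr
  exact uni_one_iff (hr.congr (LinearEquiv.ofInjective f.hom hf).symm)

end NakAux

set_option linter.unusedSectionVars false
namespace NakAux
open ArtinAlg

variable {A : Type} [Ring A] [CN A]

theorem le_of_not_inj {T I L : Type} [AddCommGroup T] [Module A T] [AddCommGroup I] [Module A I]
    [AddCommGroup L] [Module A L] [IsSimpleModule A T] (f : T →ₗ[A] I) (g : I →ₗ[A] L)
    (h : ¬ Function.Injective (g ∘ₗ f)) : LinearMap.range f ≤ LinearMap.ker g := by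
  rcases eq_bot_or_eq_top (LinearMap.ker (g ∘ₗ f)) with h1 | h1
  · exact absurd (LinearMap.ker_eq_bot.1 h1) h
  · rintro _ ⟨t, rfl⟩
    have : t ∈ LinearMap.ker (g ∘ₗ f) := by rw [h1]; trivial
    exact this

theorem env_chain {T W : Smp A} {I : ModuleCat.{0} A} (f : T.1 ⟶ I)
    (hf : IsInjectiveEnvelopeHom A f) (r : I ⟶ W.1) (hr : Epi r)
    (hr' : ∀ (N : ModuleCat.{0} A) (g : N ⟶ I), Epi (g ≫ r) → Epi g) :
    Module.Finite A I ∧ Chain A I := by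
  obtain ⟨hI, hm, hess⟩ := hf
  have hfin : Module.Finite A I := by
    rw [ModuleCat.epi_iff_surjective] at hr
    obtain ⟨w, hw⟩ := exists_ne (0 : W.1)
    obtain ⟨x, hx⟩ := hr w
    have := hr' (ModuleCat.of A A) (ModuleCat.ofHom (LinearMap.toSpanSingleton A I x)) (by
      rw [ModuleCat.epi_iff_surjective]
      have h0 : r.hom ∘ₗ LinearMap.toSpanSingleton A I x ≠ 0 := by
        intro h
        have := LinearMap.congr_fun h 1
        simp at this
        exact hw (hx.symm.trans this)
      exact surj_of_ne_zero _ h0)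
    rw [ModuleCat.epi_iff_surjective] at this
    exact Module.Finite.of_surjective (LinearMap.toSpanSingleton A I x) this
  refine ⟨hfin, ?_⟩
  apply chain_of_indec
  rw [ModuleCat.mono_iff_injective] at hm
  have hinj : Function.Injective f.hom := hm
  have key : ∀ N : Submodule A I, N ≠ ⊥ → LinearMap.range f.hom ≤ N := by
    intro N hN
    have := le_of_not_inj f.hom N.mkQ (fun h => hN (by
      have h2 := hess (ModuleCat.of A (I ⧸ N)) (ModuleCat.ofHom N.mkQ) (by
        rw [ModuleCat.mono_iff_injective]; exact h)
      rw [ModuleCat.mono_iff_injective] at h2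
      rw [← N.ker_mkQ]
      exact LinearMap.ker_eq_bot.2 h2))
    rwa [Submodule.ker_mkQ] at this
  refine ⟨hinj.nontrivial, fun N₁ N₂ hc => ?_⟩
  by_contra hcon
  push Not at hcon
  have h1 := hc.disjoint (key N₁ hcon.1) (key N₂ hcon.2)
  obtain ⟨t, ht⟩ := exists_ne (0 : T.1)
  apply ht
  apply hinj
  rw [map_zero]
  exact h1 ⟨t, rfl⟩

theorem psi_imp {T U : Smp A} (h : IsPsiOf A T.1 U.1) :
    ∃ y, cc U ≤ y ∧ y ≤ cc (tau U) ∧ Nonempty (T.1 ≃ₗ[A] (tau^[y] U).1) := by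
  obtain ⟨I, ⟨f, hf⟩, W, ⟨hWs, r, hr, hr'⟩, hτ⟩ := h
  obtain ⟨hfin, hch⟩ := env_chain (W := ⟨W, hWs⟩) f hf r hr hr'
  obtain ⟨eW⟩ := tau_of_isTau (W := ⟨W, hWs⟩) hτ
  obtain ⟨hI, hm, -⟩ := hf
  rw [ModuleCat.mono_iff_injective] at hm
  rw [ModuleCat.epi_iff_surjective] at hr
  have hu : Uni I ⟨W, hWs⟩ (Module.length A I).toNat :=
    ⟨hch, (ENat.natCast_toNat (len_fin I)).symm, r.hom, hr⟩
  replace hu := hu.congr_top eW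
  generalize (Module.length A I).toNat = k at hu
  obtain ⟨l, rfl⟩ : ∃ l, k = l + 1 := ⟨k - 1, by have := hu.one_le; omega⟩
  obtain ⟨eT⟩ := hu.soc_unique f.hom hm
  refine ⟨l + 1, ?_, hu.len_le, ⟨eT⟩⟩
  by_contra hlt
  push Not at hlt
  obtain ⟨Y, hY⟩ := exists_uni U (l + 1 + 1) (by omega) (by omega)
  obtain ⟨i, hi⟩ := hY.exists_soc
  have hinj : Module.Injective A I := (Module.injective_iff_injective_object A I).2 hI
  obtain ⟨g, hg⟩ := hinj.out (i ∘ₗ eT.toLinearMap) (hi.comp eT.injective) f.hom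
  have hgi : Function.Injective g := by
    apply hY.chain.inj_of g (i ∘ₗ eT.toLinearMap)
    intro a b hab
    apply hm
    rw [← hg, ← hg]
    exact hab
  have := Module.length_le_of_injective g hgi
  rw [hY.len, hu.len] at this
  have := Nat.cast_le.1 this
  omega

theorem psi_of {T U : Smp A} {y : ℕ} (h1 : cc U ≤ y) (h2 : y ≤ cc (tau U))
    (e : T.1 ≃ₗ[A] (tau^[y] U).1) : IsPsiOf A T.1 U.1 := by
  have h3 := cc_two_le U
  obtain ⟨l, rfl⟩ : ∃ l, y = l + 1 := ⟨y - 1, by omega⟩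
  obtain ⟨I, hI⟩ := exists_uni (tau U) (l + 1) (by omega) h2
  obtain ⟨i, hi⟩ := hI.exists_soc
  have e' : T.1 ≃ₗ[A] (tau^[l] (tau U)).1 := e
  have hfi : Function.Injective (i ∘ₗ e'.toLinearMap) := hi.comp e'.injective
  obtain ⟨r, hr⟩ := hI.top
  refine ⟨I, ⟨ModuleCat.ofHom (i ∘ₗ e'.toLinearMap), ?_, ?_, ?_⟩, (tau U).1,
    ⟨(tau U).2, ModuleCat.ofHom r, ?_, ?_⟩, isTau U⟩
  · exact (Module.injective_iff_injective_object A I).1 (hI.injective h1)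
  · rw [ModuleCat.mono_iff_injective]; exact hfi
  · intro N g hg
    rw [ModuleCat.mono_iff_injective] at hg ⊢
    exact hI.chain.inj_of g.hom (i ∘ₗ e'.toLinearMap) hg
  · rw [ModuleCat.epi_iff_surjective]; exact hr
  · intro N g hg
    rw [ModuleCat.epi_iff_surjective] at hg ⊢
    exact hI.chain.surj_of_comp r hr g.hom (ne_zero_of_surj _ hg)

end NakAux

set_option linter.unusedSectionVars false
namespace NakAux
open ArtinAlg

/-! ### Combinatorics of a monotone function -/

/-- combinatorial version of `pd [i,j) ≤ n` -/
def DD (p : ℕ → ℕ) : ℕ → ℕ → ℕ → Prop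
  | 0, i, j => j = p i
  | n + 1, i, j => j = p i ∨ DD p n j (p i)

theorem DD_of_collapse {p : ℕ → ℕ} (m i j : ℕ) (h : p^[m + 1] i = p^[m + 1] j) :
    DD p (2 * m + 1) i j := by
  induction m generalizing i j with
  | zero => exact Or.inr h
  | succ m ih =>
    right
    right
    exact ih (p i) (p j) h

theorem collapse_of_DD {p : ℕ → ℕ} (n i j : ℕ) (h : DD p n i j) :
    ∃ m, (p^[m] i = p^[m] j ∧ 2 * m ≤ n + 1) ∨ (p^[m] j = p^[m] (p i) ∧ 2 * m ≤ n) := by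
  induction n generalizing i j with
  | zero =>
    have h' : j = p i := h
    exact ⟨0, Or.inr ⟨h', by omega⟩⟩
  | succ n ih =>
    rcases h with h | h
    · exact ⟨0, Or.inr ⟨h, by omega⟩⟩
    · obtain ⟨m, ⟨h1, h2⟩ | ⟨h1, h2⟩⟩ := ih _ _ h
      · exact ⟨m, Or.inr ⟨h1, h2⟩⟩
      · exact ⟨m + 1, Or.inl ⟨h1, by omega⟩⟩

theorem step_iff {f : ℕ → ℕ} (hf : Monotone f) {a b : ℕ} (hab : a ≤ b) :
    f a < f b ↔ ∃ y, a ≤ y ∧ y < b ∧ f y < f (y + 1) := by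
  constructor
  · intro h
    by_contra hcon
    push Not at hcon
    have : ∀ k, a + k ≤ b → f (a + k) ≤ f a := by
      intro k
      induction k with
      | zero => intro _; exact le_rfl
      | succ k ih =>
        intro hk
        exact (hcon (a + k) (by omega) (by omega)).trans (ih (by omega))
    have := this (b - a) (by omega)
    rw [Nat.add_sub_cancel' hab] at this
    omega
  · rintro ⟨y, h1, h2, h3⟩
    exact lt_of_le_of_lt (hf h1) (lt_of_lt_of_le h3 (hf h2))

theorem collapse_ge {p : ℕ → ℕ} {m n i j : ℕ} (hmn : m ≤ n) (h : p^[m] i = p^[m] j) :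
    p^[n] i = p^[n] j := by
  obtain ⟨k, rfl⟩ := Nat.exists_eq_add_of_le' hmn
  rw [Function.iterate_add_apply, Function.iterate_add_apply, h]

/-! ### Projective dimension -/

section pd
variable {A : Type} [Ring A]

theorem projDimLE_iff (n : ℕ) (M : ModuleCat.{0} A) :
    ProjDimLE A n M ↔ HasProjectiveDimensionLE M n := by
  have hker : ∀ (P M : ModuleCat.{0} A) (f : P ⟶ M), Epi f →
      (ShortComplex.mk (kernel.ι f) f (kernel.condition f)).ShortExact := by
    intro P M f hf
    exact { exact := ShortComplex.exact_kernel f, mono_f := by dsimp; infer_instance,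
            epi_g := hf }
  constructor
  · intro h
    induction h with
    | zero M h => exact (projective_iff_hasProjectiveDimensionLE_zero _).1 h
    | succ n M P f hP hf h ih =>
      exact ((hker P M f hf).hasProjectiveDimensionLT_X₃_iff n hP).2 ih
  · intro h
    induction n generalizing M with
    | zero => exact ProjDimLE.zero M ((projective_iff_hasProjectiveDimensionLE_zero _).2 h)
    | succ n ih =>
      refine ProjDimLE.succ n M (Projective.over M) (Projective.π M) inferInstance inferInstance ?_
      apply ih
      exact ((hker _ M (Projective.π M) inferInstance).hasProjectiveDimensionLT_X₃_iff n
        (inferInstanceAs (Projective (Projective.over M)))).1 h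

theorem projDim_le_iff (n : ℕ) (M : ModuleCat.{0} A) :
    projDim A M ≤ n ↔ HasProjectiveDimensionLE M n := by
  constructor
  · intro h
    have hne : {d : ℕ∞ | ∃ n : ℕ, d = n ∧ ProjDimLE A n M}.Nonempty := by
      by_contra hcon
      rw [Set.not_nonempty_iff_eq_empty] at hcon
      rw [projDim, hcon, sInf_empty] at h
      exact absurd h (by simp)
    obtain ⟨k, hk, hk'⟩ := csInf_mem hne
    rw [projDim, hk] at h
    have hkn : k ≤ n := by exact_mod_cast h
    rw [projDimLE_iff] at hk'
    exact hasProjectiveDimensionLT_of_ge M (k + 1) (n + 1) (by omega)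
  · intro h
    exact sInf_le ⟨n, rfl, (projDimLE_iff n M).2 h⟩

theorem exact_of {M N L : Type} [AddCommGroup M] [Module A M] [AddCommGroup N] [Module A N]
    [AddCommGroup L] [Module A L] (f : M →ₗ[A] N) (g : N →ₗ[A] L) (hf : Function.Injective f)
    (hg : Function.Surjective g) (h : LinearMap.range f = LinearMap.ker g) :
    (ShortComplex.mk (ModuleCat.ofHom f) (ModuleCat.ofHom g) (by
      ext x
      have : f x ∈ LinearMap.ker g := h ▸ ⟨x, rfl⟩
      exact this)).ShortExact where
  exact := by
    rw [ShortComplex.moduleCat_exact_iff_range_eq_ker]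
    exact h
  mono_f := by rw [ModuleCat.mono_iff_injective]; exact hf
  epi_g := by rw [ModuleCat.epi_iff_surjective]; exact hg

variable [CN A]

def pp (S : Smp A) (i : ℕ) : ℕ := i + cc (tau^[i] S)

theorem pp_mono (S : Smp A) : Monotone (pp S) := by
  apply monotone_nat_of_le_succ
  intro n
  have := cc_tau (tau^[n] S)
  rw [← Function.iterate_succ_apply' tau n S] at this
  simp only [Nat.succ_eq_add_one] at this
  unfold pp
  omega

theorem pp_lt (S : Smp A) (i : ℕ) : i < pp S i := by
  have := cc_two_le (tau^[i] S)
  unfold pp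
  omega

theorem pd_iff (S : Smp A) (n : ℕ) : ∀ (M : Type) [AddCommGroup M] [Module A M] (i j : ℕ),
    i < j → j ≤ pp S i → Uni M (tau^[i] S) (j - i) →
      (HasProjectiveDimensionLE (ModuleCat.of A M) n ↔ DD (pp S) n i j) := by
  have hproj : ∀ (M : Type) [AddCommGroup M] [Module A M] (i j : ℕ),
    i < j → j ≤ pp S i → Uni M (tau^[i] S) (j - i) →
      (Projective (ModuleCat.of A M) ↔ j = pp S i) := by
    intro M _ _ i j h1 h2 h
    rw [← IsProjective.iff_projective, h.proj_iff]
    unfold pp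
    omega
  induction n with
  | zero =>
    intro M _ _ i j h1 h2 h
    rw [← projective_iff_hasProjectiveDimensionLE_zero, hproj M i j h1 h2 h]
    rfl
  | succ n ih =>
    intro M _ _ i j h1 h2 h
    rcases h2.eq_or_lt with h3 | h3
    · have hP := (hproj M i j h1 h2 h).2 h3
      refine iff_of_true ?_ (Or.inl h3)
      exact hasProjectiveDimensionLT_of_ge _ 1 _ (by omega)
    · obtain ⟨f, hf⟩ := h.top
      obtain ⟨q, -, hq⟩ := h.lift f hf
      have hk := h.syz (by unfold pp at h3; omega) q hq
      have e1 : tau^[j - i] (tau^[i] S) = tau^[j] S := by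
        rw [← Function.iterate_add_apply, Nat.sub_add_cancel h1.le]
      have e2 : cc (tau^[i] S) - (j - i) = pp S i - j := by
        unfold pp; omega
      rw [e1, e2] at hk
      have hse := exact_of (LinearMap.ker q).subtype q (Submodule.subtype_injective _) hq
        (Submodule.range_subtype _)
      have := hse.hasProjectiveDimensionLT_X₃_iff n
        ((IsProjective.iff_projective (R := A) (PC (tau^[i] S))).1 inferInstance)
      refine this.trans ((ih _ j (pp S i) h3 (pp_mono S h1.le) hk).trans ?_)
      constructor
      · exact Or.inr
      · rintro (h4 | h4)
        · omega
        · exact h4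

end pd

/-! ### psi-paths -/
section psi
variable {A : Type} [Ring A] [CN A]

theorem psi_congr {T U T' U' : Smp A} (e : T.1 ≃ₗ[A] T'.1) (e' : U.1 ≃ₗ[A] U'.1)
    (h : IsPsiOf A T.1 U.1) : IsPsiOf A T'.1 U'.1 := by
  obtain ⟨y, h1, h2, ⟨h3⟩⟩ := psi_imp h
  obtain ⟨e2⟩ := tau_congr e'
  obtain ⟨e3⟩ := tau_iter_congr e' y
  rw [cc_congr e'] at h1
  rw [cc_congr e2] at h2
  exact psi_of h1 h2 (e.symm.trans (h3.trans e3))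

theorem path_congr {m : ℕ} {T U : ModuleCat.{0} A} (e : T ≅ U) (h : PsiPathTo A m T) :
    PsiPathTo A m U := by
  obtain ⟨h1, c, h2, h3, ⟨h4⟩⟩ := h
  exact ⟨h1, c, h2, h3, ⟨h4 ≪≫ e⟩⟩

theorem path_one (U : Smp A) : PsiPathTo A 1 U.1 :=
  ⟨le_rfl, fun _ => U.1, fun _ _ => U.2, fun i hi => by omega, ⟨Iso.refl _⟩⟩

theorem path_succ (m : ℕ) (U : Smp A) :
    PsiPathTo A (m + 2) U.1 ↔ ∃ T : Smp A, PsiPathTo A (m + 1) T.1 ∧ IsPsiOf A T.1 U.1 := by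
  constructor
  · rintro ⟨-, c, h1, h2, ⟨h3⟩⟩
    refine ⟨⟨c m, h1 m (by omega)⟩, ⟨by omega, c, fun i hi => h1 i (by omega),
      fun i hi => h2 i (by omega), ⟨Iso.refl _⟩⟩, ?_⟩
    exact psi_congr (T := ⟨c m, h1 m (by omega)⟩) (T' := ⟨c m, h1 m (by omega)⟩)
      (U := ⟨c (m + 1), h1 (m + 1) (by omega)⟩) (U' := U) (LinearEquiv.refl _ _)
      h3.toLinearEquiv (h2 m (by omega))
  · rintro ⟨T, ⟨-, c, h1, h2, ⟨h3⟩⟩, h⟩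
    refine ⟨by omega, fun i => if i ≤ m then c i else U.1, ?_, ?_, ?_⟩
    · intro i hi
      by_cases him : i ≤ m
      · have e : (if i ≤ m then c i else U.1) = c i := if_pos him
        beta_reduce
        rw [e]; exact h1 i (by omega)
      · have e : (if i ≤ m then c i else U.1) = U.1 := if_neg him
        beta_reduce
        rw [e]; exact U.2
    · intro i hi
      have him : i ≤ m := by omega
      by_cases him' : i + 1 ≤ m
      · simp only [him, him', if_true]; exact h2 i (by omega)
      · obtain rfl : i = m := by omega
        simp only [him, him', if_true, if_false]
        exact psi_congr (T := T) (T' := ⟨c i, h1 i (by omega)⟩) (U := U) (U' := U)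
          (Iso.toLinearEquiv (h3 : c i ≅ T.1)).symm (LinearEquiv.refl _ _) h
    · have : ¬ (m + 2 - 1 ≤ m) := by omega
      simp only [this, if_false]
      exact ⟨Iso.refl _⟩

theorem path_iff (S : Smp A) (m x : ℕ) :
    PsiPathTo A (m + 1) (tau^[x] S).1 ↔ (pp S)^[m] x < (pp S)^[m] (x + 1) := by
  induction m generalizing x with
  | zero =>
    refine iff_of_true (path_one _) (by simp)
  | succ m ih =>
    rw [path_succ, Function.iterate_succ_apply, Function.iterate_succ_apply,
      step_iff ((pp_mono S).iterate m) (pp_mono S (Nat.le_succ x))]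
    constructor
    · rintro ⟨T, hT, hpsi⟩
      obtain ⟨y, h1, h2, ⟨e⟩⟩ := psi_imp hpsi
      rw [← Function.iterate_add_apply] at e
      rw [← Function.iterate_succ_apply' tau x S] at h2
      refine ⟨y + x, by unfold pp; omega, by unfold pp; omega, ?_⟩
      rw [← ih]
      exact path_congr e.toModuleIso hT
    · rintro ⟨y, h1, h2, h3⟩
      rw [← ih] at h3
      refine ⟨_, h3, psi_of (y := y - x) ?_ ?_ ?_⟩
      · unfold pp at h1; omega
      · rw [← Function.iterate_succ_apply' tau x S]
        unfold pp at h2; omega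
      · rw [← Function.iterate_add_apply, Nat.sub_add_cancel]
        have := pp_lt S x
        omega

theorem aVal_le_iff (S : Smp A) (N x : ℕ) :
    aVal A (tau^[x] S).1 ≤ N ↔ (pp S)^[N] x = (pp S)^[N] (x + 1) := by
  constructor
  · intro h
    by_contra hne
    have hlt := lt_of_le_of_ne ((pp_mono S).iterate N (Nat.le_succ x)) hne
    rw [← path_iff] at hlt
    have h1 : ((N + 1 : ℕ) : ℕ∞) ≤ aVal A (tau^[x] S).1 := le_sSup ⟨N + 1, rfl, hlt⟩
    have := h1.trans h
    have := Nat.cast_le.1 this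
    omega
  · intro h
    apply sSup_le
    rintro d ⟨m, rfl, hm⟩
    have h1 := hm.1
    obtain ⟨k, rfl⟩ : ∃ k, m = k + 1 := ⟨m - 1, by omega⟩
    rw [path_iff] at hm
    rw [Nat.cast_le]
    by_contra hk
    have := collapse_ge (n := k) (by omega) h
    omega

theorem one_le_aVal (S : Smp A) : 1 ≤ aVal A S.1 := le_sSup ⟨1, rfl, path_one S⟩

/-- collapse on an interval forces collapse at the uniform bound -/
theorem collapse_uniform (S : Smp A) (a : ℕ) (ha : aAlg A = a) {m i j : ℕ} (hij : i ≤ j)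
    (h : (pp S)^[m] i = (pp S)^[m] j) : (pp S)^[a] i = (pp S)^[a] j := by
  by_contra hne
  have hlt := lt_of_le_of_ne ((pp_mono S).iterate a hij) hne
  rw [step_iff ((pp_mono S).iterate a) hij] at hlt
  obtain ⟨y, h1, h2, h3⟩ := hlt
  have hy : (pp S)^[m] y = (pp S)^[m] (y + 1) := by
    have m1 := (pp_mono S).iterate m h1
    have m2 := (pp_mono S).iterate m (show y + 1 ≤ j from h2)
    have m3 := (pp_mono S).iterate m (Nat.le_succ y)
    simp only [Nat.succ_eq_add_one] at m3
    omega
  rw [← aVal_le_iff] at hy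
  have hfin : aVal A (tau^[y] S).1 ≠ ⊤ := ne_top_of_le_ne_top (ENat.natCast_ne_top m) hy
  have hle : aVal A (tau^[y] S).1 ≤ a := by
    rw [← ha]
    exact le_sSup ⟨_, (tau^[y] S).2, hfin, rfl⟩
  rw [aVal_le_iff] at hle
  omega

theorem lower (S : Smp A) (hS : aVal A S.1 ≠ ⊤) : 2 * aVal A S.1 ≤ finProDim A + 1 := by
  obtain ⟨N, hN⟩ := ENat.ne_top_iff_exists.1 hS
  have h1 := one_le_aVal S
  rw [← hN] at h1 ⊢
  have h1' : 1 ≤ N := by exact_mod_cast h1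
  obtain ⟨k, rfl⟩ : ∃ k, N = k + 1 := ⟨N - 1, by omega⟩
  have c1 := (aVal_le_iff S (k + 1) 0).1 hN.symm.le
  have c2 : ¬ (pp S)^[k] 0 = (pp S)^[k] 1 := by
    intro h
    have h2 : aVal A S.1 ≤ k := (aVal_le_iff S k 0).2 h
    rw [← hN] at h2
    have := Nat.cast_le.1 h2
    omega
  have hp0 : 1 ≤ pp S 0 := pp_lt S 0
  have hpd := fun n => pd_iff S n S.1 0 1 one_pos hp0 (uni_simple S)
  have hle : projDim A S.1 ≤ (2 * k + 1 : ℕ) :=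
    (projDim_le_iff _ _).2 ((hpd _).2 (DD_of_collapse k 0 1 c1))
  have hne : projDim A S.1 ≠ ⊤ := ne_top_of_le_ne_top (ENat.natCast_ne_top _) hle
  have hS1 : Module.Finite A S.1 := (uni_simple S).finite
  have hfp : projDim A S.1 ≤ finProDim A := le_sSup ⟨S.1, hS1, rfl, hne⟩
  obtain ⟨d, hd⟩ := ENat.ne_top_iff_exists.1 hne
  have hD := (hpd d).1 ((projDim_le_iff d S.1).1 hd.symm.le)
  have hdk : 2 * (k + 1) ≤ d + 1 := by
    obtain ⟨m, ⟨e1, e2⟩ | ⟨e1, e2⟩⟩ := collapse_of_DD d 0 1 hD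
    · by_contra hcon
      exact c2 (collapse_ge (by omega) e1)
    · by_contra hcon
      have e3 := collapse_ge (n := k) (by omega) e1
      rw [← Function.iterate_succ_apply, c1, Function.iterate_succ_apply'] at e3
      have := pp_lt S ((pp S)^[k] 1)
      simp only [zero_add] at e3
      omega
  refine le_trans ?_ (add_le_add hfp le_rfl)
  rw [← hd]
  exact_mod_cast hdk

theorem lower' : 2 * aAlg A - 1 ≤ finProDim A := by
  rw [tsub_le_iff_right]
  rcases eq_or_ne (finProDim A) ⊤ with h | h
  · rw [h]; simp
  obtain ⟨f, hf⟩ := ENat.ne_top_iff_exists.1 h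
  rw [← hf]
  have : aAlg A ≤ ((f + 1) / 2 : ℕ) := by
    apply sSup_le
    rintro d ⟨S, hS, h1, rfl⟩
    have h2 := lower ⟨S, hS⟩ h1
    obtain ⟨N, hN⟩ := ENat.ne_top_iff_exists.1 h1
    simp only [← hN, ← hf] at h2 ⊢
    have h3 : 2 * N ≤ f + 1 := by exact_mod_cast h2
    rw [Nat.cast_le]
    omega
  refine (mul_le_mul_right this 2).trans ?_
  have h4 : 2 * ((f + 1) / 2) ≤ f + 1 := by omega
  exact_mod_cast h4

theorem upper_aux (a : ℕ) (ha : aAlg A = a) (M : Type) [AddCommGroup M] [Module A M]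
    [Module.Finite A M] : ∀ n, HasProjectiveDimensionLE (ModuleCat.of A M) n →
      HasProjectiveDimensionLE (ModuleCat.of A M) (2 * a) := by
  refine decomp_ind (A := A) (fun M _ _ => ∀ n, HasProjectiveDimensionLE (ModuleCat.of A M) n →
      HasProjectiveDimensionLE (ModuleCat.of A M) (2 * a)) ?_ ?_ ?_ M
  · intro M _ _ hM n _
    have : HasProjectiveDimensionLT (ModuleCat.of A M) 0 :=
      (ModuleCat.isZero_of_subsingleton (ModuleCat.of A M)).hasProjectiveDimensionLT_zero
    exact hasProjectiveDimensionLT_of_ge _ 0 _ (by omega)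
  · intro M _ _ hfin hnt hch n hn
    obtain ⟨S, l, h⟩ := exists_uni_of_chain hch
    have hl : l ≤ pp S 0 := by unfold pp; simpa using h.len_le
    have h1 := h.one_le
    have hpd := fun n => pd_iff S n M 0 l h1 hl (by simpa using h)
    have hcol : (pp S)^[a] 0 = (pp S)^[a] l ∨ (pp S)^[a] l = (pp S)^[a] (pp S 0) := by
      obtain ⟨m, ⟨e1, -⟩ | ⟨e1, -⟩⟩ := collapse_of_DD _ _ _ ((hpd n).1 hn)
      · left; exact collapse_uniform S a ha (by omega) e1
      · right; exact collapse_uniform S a ha hl e1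
    rw [hpd]
    cases a with
    | zero =>
      rcases hcol with h2 | h2
      · simp only [Function.iterate_zero, id] at h2; omega
      · exact h2
    | succ k =>
      rcases hcol with h2 | h2
      · have h3 := (hpd _).2 (DD_of_collapse k 0 l h2)
        exact (hpd _).1 (hasProjectiveDimensionLT_of_ge _ (2 * k + 1 + 1) _ (by omega))
      · exact Or.inr (DD_of_collapse k l _ h2)
  · intro M _ _ N₁ N₂ hc q1 q2 n hn
    have r : ∀ (N N' : Submodule A M) (hc : IsCompl N N'),
        HasProjectiveDimensionLE (ModuleCat.of A N) n := by
      intro N N' hc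
      refine Retract.hasProjectiveDimensionLT (Y := ModuleCat.of A M)
        { i := ModuleCat.ofHom N.subtype, r := ModuleCat.ofHom (N.projectionOnto N' hc),
          retract := ?_ } (n + 1)
      ext x
      exact congrArg Subtype.val (Submodule.projectionOnto_apply_left hc x)
    have hse := exact_of N₁.subtype (N₂.projectionOnto N₁ hc.symm) (Submodule.subtype_injective _)
      (Submodule.projectionOnto_surjective _)
      (by rw [Submodule.range_subtype, Submodule.ker_projectionOnto])
    exact hse.hasProjectiveDimensionLT_X₂ _ (q1 n (r _ _ hc)) (q2 n (r _ _ hc.symm))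

theorem upper : finProDim A ≤ 2 * aAlg A := by
  rcases eq_or_ne (aAlg A) ⊤ with h | h
  · rw [h]; simp
  obtain ⟨a, ha⟩ := ENat.ne_top_iff_exists.1 h
  apply sSup_le
  rintro d ⟨M, hM, rfl, hne⟩
  obtain ⟨n, hn⟩ := ENat.ne_top_iff_exists.1 hne
  have h1 := upper_aux a ha.symm M n ((projDim_le_iff n M).1 hn.symm.le)
  rw [← ha]
  have := (projDim_le_iff (2 * a) M).2 h1
  exact_mod_cast this

end psi
end NakAux


open ArtinAlg in
/-- Let `A` be a cyclic Nakayama algebra. Then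
`2 a(A) - 1 ≤ fin-pro A ≤ 2 a(A)`. -/
theorem statement_15 (R : Type) [CommRing R] [IsArtinianRing R]
    (A : Type) [Ring A] [Algebra R A] [Module.Finite R A]
    (hCyc : IsCyclicNakayama A) :
    2 * aAlg A - 1 ≤ finProDim A ∧ finProDim A ≤ 2 * aAlg A := by
  have hart : IsArtinianRing A := isArtinian_of_tower R inferInstance
  have : NakAux.CN A := ⟨hart, hCyc.1, hCyc.2.2⟩
  exact ⟨NakAux.lower', NakAux.upper⟩
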